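/- arXiv:math/0204143 — 3 statements merged into one kernel-verified Lean document; each statement's English description precedes it below -/
import Mathlib

section
/- For every cardinal number α ≥ 𝔠, there exists a metrizable topological space X with |X| = α such that every quasiordered set (Q, ≤) with |Q| ≤ α has a representation by clopen subspaces of X with respect to continuous bijections; that is, there is a family {X(q) : q ∈ Q} of pairwise non-homeomorphic clopen subsets of X such that q ≤ q' if and only if there exists a continuous bijection from X(q) onto X(q'). -/
universe u

open Cardinal

/-- The representation property of the space `X` for a quasiorder, with respect to
continuous bijections. -/
def RepresentsByContBij (α : Cardinal.{u}) (X : Type u) [TopologicalSpace X] : Prop :=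
  ∀ (Q : Type u) (le : Q → Q → Prop), #Q ≤ α →
    (∀ q, le q q) → (∀ a b c, le a b → le b c → le a c) →
    ∃ Xq : Q → Set X,
      (∀ q, IsClopen (Xq q)) ∧
      (∀ q q', q ≠ q' → IsEmpty ((Xq q) ≃ₜ (Xq q'))) ∧
      (∀ q q', le q q' ↔
        ∃ f : (Xq q) → (Xq q'), Continuous f ∧ Function.Bijective f)

/-!
Transfinite iteration of the quasi-component of a point gives a rank that continuous injections can
only lower: if the iteration at `f x` has shrunk to `{f x}` by stage `w`, so has the iteration at
`x`. For each `w` in a well-order `W` there is a metrizable space `RankSpace w` whose center has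
rank exactly `w`, while at all other points the iteration never shrinks to a point. It consists of
the zero vector and of connected slabs in a normed space: as `m → ∞`, the slabs `(v, m)` accumulate
both at zero and at every point of a slab `(δ, n)` with `v < δ`, so that the points of these slabs
stay in the quasi-component of zero as long as the slabs `(v, m)` are present. The latter leave it
next, because their coordinates at `v` are nonzero and form a countable set. For `δ > w`, the slabs
at `δ` are cut off by a clopen set; hence increasing `w` only coarsens the topology.

For sums of rank spaces, a continuous bijection from the family `ρ` to the family `ρ'` therefore
yields an injection `g` of the indices with `ρ (g l) ≤ ρ' l`, and conversely an index bijection that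
does not decrease ranks yields a continuous bijection. It remains to encode quasiorders in families
of ranks. Storing the down-set of `q` as bits, the bit at `i` being the lowest digit of a rank that
starts with `i`, works because an injection of a well-order into itself that nowhere increases is
the identity. Equivalent elements `q` and `q'`, which have the same down-set, are told apart by a
mark in a bi-infinite sequence of ranks; a shift of the sequence changes any mark into any other
without decreasing ranks.
-/

open Filter Function Set Submodule TopologicalSpace Topology

section QuasiComponent

variable {X Y : Type*} [TopologicalSpace X] [TopologicalSpace Y] {A : Set X} {x y : X}

/-- The quasi-component of `x` in the subspace `A`: the points of `A` that no separation of `A`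
into two relatively open sets, encoded as a `Bool`-valued function, separates from `x`. -/
def quasiComponentIn (A : Set X) (x : X) : Set X :=
  {y ∈ A | ∀ f : X → Bool, ContinuousOn f A → f y = f x}

lemma map_mem_quasiComponentIn {f : X → Y} (hf : Continuous f) {B : Set Y} (hAB : MapsTo f A B)
    (hy : y ∈ quasiComponentIn A x) : f y ∈ quasiComponentIn B (f x) :=
  ⟨hAB hy.1, fun φ hφ => hy.2 (φ ∘ f) (hφ.comp hf.continuousOn hAB)⟩

lemma subset_quasiComponentIn_of_isPreconnected {S : Set X} (hS : IsPreconnected S) (hSA : S ⊆ A)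
    (hx : x ∈ S) : S ⊆ quasiComponentIn A x :=
  fun _ hy => ⟨hSA hy, fun _ hf => hS.constant (hf.mono hSA) hy hx⟩

lemma quasiComponentIn_subset_of_isClopen {C : Set X} (hC : IsClopen ((↑) ⁻¹' C : Set A))
    (hx : x ∈ C) : quasiComponentIn A x ⊆ C := by
  classical
  intro y hy
  have hcont : ContinuousOn (fun z => decide (z ∈ C)) A := by
    rw [continuousOn_iff_continuous_domRestrict, continuous_bool_rng true]
    convert hC using 1
    ext z
    simp
  simpa [hx] using hy.2 _ hcont

lemma eq_of_mem_quasiComponentIn_of_countable_image {g : X → ℝ} (hg : ContinuousOn g A)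
    (hcount : (g '' A).Countable) (hy : y ∈ quasiComponentIn A x) : g y = g x := by
  have gap {a b : ℝ} (hab : a < b) : ∃ c, a < c ∧ c < b ∧ ∀ z ∈ A, g z ≠ c := by
    obtain ⟨c, hc, hac, hcb⟩ := (hcount.dense_compl ℝ).exists_between hab
    exact ⟨c, hac, hcb, fun z hz h => hc ⟨z, hz, h⟩⟩
  have hg' : Continuous (fun z : A => g z) := hg.domRestrict
  have clopen_gt {c : ℝ} (hc : ∀ z ∈ A, g z ≠ c) : IsClopen ((↑) ⁻¹' {z | c < g z} : Set A) := by
    have hle (z : A) : c < g z ↔ c ≤ g z := (hc z z.2).symm.le_iff_lt.symm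
    refine ⟨?_, isOpen_lt continuous_const hg'⟩
    simpa only [preimage_ofPred_eq, hle] using isClosed_le continuous_const hg'
  by_contra hne
  rcases lt_or_gt_of_ne hne with hlt | hlt
  · obtain ⟨c, hyc, hcx, hc⟩ := gap hlt
    exact hyc.not_gt (quasiComponentIn_subset_of_isClopen (clopen_gt hc) hcx hy)
  · obtain ⟨c, hxc, hcy, hc⟩ := gap hlt
    have hC : IsClopen ((↑) ⁻¹' {z | c < g z}ᶜ : Set A) := (clopen_gt hc).compl
    exact quasiComponentIn_subset_of_isClopen hC hxc.not_gt hy hcy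

lemma mem_quasiComponentIn_of_tendsto {ι : Type*} {l : Filter ι} [l.NeBot] {a b : ι → X}
    {S : ι → Set X} (hx : x ∈ A) (hy : y ∈ A) (ha : Tendsto a l (𝓝 x)) (hb : Tendsto b l (𝓝 y))
    (hS : ∀ i, IsPreconnected (S i)) (hSA : ∀ i, S i ⊆ A) (haS : ∀ i, a i ∈ S i)
    (hbS : ∀ i, b i ∈ S i) : y ∈ quasiComponentIn A x := by
  refine ⟨hy, fun f hf => ?_⟩
  have hfa : Tendsto (f ∘ a) l (𝓝 (f x)) := (hf x hx).tendsto.comp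
    (tendsto_nhdsWithin_iff.2 ⟨ha, .of_forall fun i => hSA i (haS i)⟩)
  have hfb : Tendsto (f ∘ b) l (𝓝 (f y)) := (hf y hy).tendsto.comp
    (tendsto_nhdsWithin_iff.2 ⟨hb, .of_forall fun i => hSA i (hbS i)⟩)
  have hab : f ∘ b = f ∘ a :=
    funext fun i => (hS i).constant (hf.mono (hSA i)) (hbS i) (haS i)
  exact tendsto_nhds_unique hfb (hab ▸ hfa)

/-- The transfinite iteration of the quasi-component of `x`: stage `w` is the quasi-component of
`x` in the intersection of the earlier stages, which is the whole space if `w` is minimal. -/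
def iteratedQuasiComponent {X W : Type*} [TopologicalSpace X] [Preorder W] [WellFoundedLT W]
    (x : X) (w : W) : Set X :=
  quasiComponentIn {y | ∀ v < w, y ∈ iteratedQuasiComponent x v} x
termination_by (wellFounded_lt (α := W)).wrap w
decreasing_by assumption

variable {W : Type*} [Preorder W] [WellFoundedLT W]

lemma iteratedQuasiComponent_eq (x : X) (w : W) : iteratedQuasiComponent x w =
    quasiComponentIn {y | ∀ v < w, y ∈ iteratedQuasiComponent x v} x := by
  rw [iteratedQuasiComponent]

lemma map_mem_iteratedQuasiComponent {f : X → Y} (hf : Continuous f) {w : W}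
    (hy : y ∈ iteratedQuasiComponent x w) : f y ∈ iteratedQuasiComponent (f x) w := by
  induction w using WellFoundedLT.induction generalizing y with
  | ind w ih =>
    rw [iteratedQuasiComponent_eq] at hy ⊢
    refine map_mem_quasiComponentIn hf ?_ hy
    exact fun z hz v hv => ih v hv (hz v hv)

lemma subset_iteratedQuasiComponent_of_isPreconnected {S : Set X} (hS : IsPreconnected S)
    (hx : x ∈ S) (w : W) : S ⊆ iteratedQuasiComponent x w := by
  induction w using WellFoundedLT.induction with
  | ind w ih =>
    rw [iteratedQuasiComponent_eq]
    refine subset_quasiComponentIn_of_isPreconnected hS ?_ hx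
    exact fun z hz v hv => ih v hv hz

lemma self_mem_iteratedQuasiComponent (x : X) (w : W) : x ∈ iteratedQuasiComponent x w :=
  subset_iteratedQuasiComponent_of_isPreconnected isPreconnected_singleton (mem_singleton x) w
    (mem_singleton x)

lemma iteratedQuasiComponent_subset_of_isClopen {C : Set X} (hC : IsClopen C) (hx : x ∈ C)
    (w : W) : iteratedQuasiComponent x w ⊆ C := by
  rw [iteratedQuasiComponent_eq]
  exact quasiComponentIn_subset_of_isClopen (hC.preimage continuous_subtype_val) hx

lemma iteratedQuasiComponent_eq_singleton_iff {w : W} :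
    iteratedQuasiComponent x w = {x} ↔ ∀ y ∈ iteratedQuasiComponent x w, y = x :=
  eq_singleton_iff_unique_mem.trans (and_iff_right (self_mem_iteratedQuasiComponent x w))

lemma iteratedQuasiComponent_eq_singleton_of_injective {f : X → Y} (hf : Continuous f)
    (hinj : Injective f) {w : W} (h : iteratedQuasiComponent (f x) w = {f x}) :
    iteratedQuasiComponent x w = {x} := by
  rw [iteratedQuasiComponent_eq_singleton_iff] at h ⊢
  exact fun y hy => hinj (h _ (map_mem_iteratedQuasiComponent hf hy))

lemma iteratedQuasiComponent_image_of_leftInverse {f : X → Y} {r : Y → X} (hf : Continuous f)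
    (hr : Continuous r) (hrf : LeftInverse r f) (hrange : IsClopen (range f)) (x : X) (w : W) :
    iteratedQuasiComponent (f x) w = f '' iteratedQuasiComponent x w := by
  refine Subset.antisymm (fun z hz => ?_) ?_
  · obtain ⟨y, rfl⟩ :=
      iteratedQuasiComponent_subset_of_isClopen hrange (mem_range_self x) w hz
    have hy := map_mem_iteratedQuasiComponent hr hz
    rw [hrf, hrf] at hy
    exact mem_image_of_mem f hy
  · rintro _ ⟨y, hy, rfl⟩
    exact map_mem_iteratedQuasiComponent hf hy

end QuasiComponent

section Sigma

variable {ι : Type*} {Y : ι → Type*} [∀ i, TopologicalSpace (Y i)]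

lemma metrizableSpace_sigma [∀ i, MetrizableSpace (Y i)] : MetrizableSpace (Σ i, Y i) := by
  let _ (i : ι) : MetricSpace (Y i) := metrizableSpaceMetric (Y i)
  let _ : MetricSpace (Σ i, Y i) := Metric.Sigma.metricSpace
  infer_instance

lemma exists_continuous_leftInverse_sigmaMk {i : ι} (y₀ : Y i) :
    ∃ r : (Σ i, Y i) → Y i, Continuous r ∧ LeftInverse r (Sigma.mk i) := by
  classical
  refine ⟨fun z => if h : z.1 = i then h ▸ z.2 else y₀, continuous_sigma fun j => ?_,
    fun y => by simp⟩
  by_cases h : j = i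
  · subst h
    simpa using continuous_id'
  · simpa [h] using continuous_const

lemma iteratedQuasiComponent_sigmaMk {W : Type*} [Preorder W] [WellFoundedLT W] {i : ι} (y : Y i)
    (w : W) : iteratedQuasiComponent (⟨i, y⟩ : Σ i, Y i) w =
      Sigma.mk i '' iteratedQuasiComponent y w := by
  obtain ⟨r, hr, hri⟩ := exists_continuous_leftInverse_sigmaMk y
  exact iteratedQuasiComponent_image_of_leftInverse continuous_sigmaMk hr hri
    isClopen_range_sigmaMk y w

lemma isClopen_range_sigmaMap {κ : Type*} (f : κ → ι) :
    IsClopen (range (Sigma.map f (fun _ => id) : (Σ k, Y (f k)) → Σ i, Y i)) := by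
  have hrange : range (Sigma.map f (fun _ => id) : (Σ k, Y (f k)) → Σ i, Y i) =
      Sigma.fst ⁻¹' range f := by
    ext ⟨i, y⟩
    constructor
    · rintro ⟨⟨k, z⟩, h⟩
      exact ⟨k, congrArg Sigma.fst h⟩
    · rintro ⟨k, rfl⟩
      exact ⟨⟨k, y⟩, rfl⟩
  rw [hrange]
  exact ⟨⟨isOpen_sigma_fst_preimage (range f)ᶜ⟩, isOpen_sigma_fst_preimage (range f)⟩

end Sigma

/-- The space of finitely supported real families with the supremum norm, encoded as the span of
the unit vectors of `ℓ^∞(ι)`. -/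
noncomputable def C00 (ι : Type*) : Submodule ℝ (lp (fun _ : ι => ℝ) ⊤) :=
  open Classical in span ℝ (range fun i => lp.single ⊤ i (1 : ℝ))

namespace C00

variable {ι : Type*}

instance : ContinuousAdd (C00 ι) :=
  inferInstanceAs (ContinuousAdd (C00 ι).toAddSubgroup)

/-- The `i`-th coordinate functional on `C00 ι`. -/
noncomputable def coord (i : ι) : C00 ι →L[ℝ] ℝ :=
  (lp.evalCLM ℝ (fun _ : ι => ℝ) ⊤ i).comp (C00 ι).subtypeL

/-- The `i`-th unit vector of `C00 ι`. -/
noncomputable def unit (i : ι) : C00 ι :=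
  ⟨open Classical in lp.single ⊤ i (1 : ℝ), subset_span (mem_range_self i)⟩

@[simp]
lemma coord_unit_self (i : ι) : coord i (unit i) = 1 :=
  open Classical in lp.single_apply_self (E := fun _ : ι => ℝ) ⊤ i 1

lemma coord_unit_of_ne {i j : ι} (h : j ≠ i) : coord j (unit i) = 0 :=
  open Classical in lp.single_apply_ne (E := fun _ : ι => ℝ) ⊤ i 1 h

lemma mk_le (ι : Type u) [Nonempty ι] : #(C00 ι) ≤ max #ι 𝔠 := by
  classical
  have hle : #(C00 ι) ≤ #(ι →₀ ℝ) := by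
    rw [C00, ← Finsupp.range_linearCombination]
    exact mk_range_le
  simpa [mk_real] using hle

end C00

section Slab

variable {W : Type*}

/-- The vectors whose coordinate at `δ` is `1 / (n + 1)` and whose earlier coordinates vanish. -/
def slab [LT W] (δ : W) (n : ℕ) : Set (C00 W) :=
  {x | C00.coord δ x = 1 / ((n : ℝ) + 1) ∧ ∀ γ < δ, C00.coord γ x = 0}

section LT

variable [LT W] {δ : W} {n : ℕ}

lemma convex_slab (δ : W) (n : ℕ) : Convex ℝ (slab δ n) := by
  intro x hx y hy a b _ _ hab
  refine ⟨?_, fun γ hγ => by simp [hx.2 γ hγ, hy.2 γ hγ]⟩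
  rw [map_add, map_smul, map_smul, hx.1, hy.1, ← add_smul, hab, one_smul]

instance : PreconnectedSpace (slab δ n) :=
  Subtype.preconnectedSpace (convex_slab δ n).isPreconnected

lemma coord_ne_zero_of_mem_slab {x : C00 W} (hx : x ∈ slab δ n) : C00.coord δ x ≠ 0 := by
  rw [hx.1]
  positivity

end LT

section Preorder

variable [Preorder W] {δ : W} {n : ℕ} {x : C00 W}

lemma add_smul_unit_mem_slab (hx : ∀ γ ≤ δ, C00.coord γ x = 0) :
    x + (1 / ((n : ℝ) + 1)) • C00.unit δ ∈ slab δ n :=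
  ⟨by simp [hx δ le_rfl],
    fun γ hγ => by simp [hx γ hγ.le, C00.coord_unit_of_ne hγ.ne]⟩

lemma add_unit_mem_slab (hx : x ∈ slab δ n) {ε : W} (hε : δ < ε) :
    x + C00.unit ε ∈ slab δ n :=
  ⟨by simp [hx.1, C00.coord_unit_of_ne hε.ne],
    fun γ hγ => by simp [hx.2 γ hγ, C00.coord_unit_of_ne (hγ.trans hε).ne]⟩

end Preorder

lemma eq_of_mem_slab [LinearOrder W] {δ ε : W} {m n : ℕ} {x : C00 W} (hm : x ∈ slab δ m)
    (hn : x ∈ slab ε n) : δ = ε ∧ m = n := by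
  obtain rfl : δ = ε := le_antisymm
    (le_of_not_gt fun h => coord_ne_zero_of_mem_slab hn (hm.2 ε h))
    (le_of_not_gt fun h => coord_ne_zero_of_mem_slab hm (hn.2 δ h))
  have hmn : 1 / ((m : ℝ) + 1) = 1 / ((n : ℝ) + 1) := hm.1.symm.trans hn.1
  simpa using hmn

end Slab

/-- A space whose points are the zero vector (the center) and the vectors of all slabs. Its
topology, defined below, depends on `w`: the slabs at `δ > w` are cut off from the others, so that
the iterated quasi-components of the center shrink to a point exactly at stage `w`. -/
inductive RankSpace {W : Type u} [LT W] (w : W) : Type u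
  | center : RankSpace w
  | point (δ : W) (n : ℕ) (x : slab δ n) : RankSpace w

namespace RankSpace

variable {W : Type u} [LinearOrder W] {w w' : W}

/-- The vector underlying a point of `RankSpace w`. -/
noncomputable def vec : RankSpace w → C00 W
  | center => 0
  | point _ _ x => x

/-- The discrete coordinate of a point of `RankSpace w`: it tells the slabs at `δ > w` apart and
identifies all others. -/
def label : RankSpace w → W
  | center => w
  | point δ _ _ => max w δ

lemma vec_injective : Injective (vec : RankSpace w → C00 W) := by
  rintro (_ | ⟨δ, m, x, hx⟩) (_ | ⟨ε, n, y, hy⟩) h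
  · rfl
  · obtain rfl : 0 = y := h
    exact absurd (map_zero _) (coord_ne_zero_of_mem_slab hy)
  · obtain rfl : x = 0 := h
    exact absurd (map_zero _) (coord_ne_zero_of_mem_slab hx)
  · obtain rfl : x = y := h
    obtain ⟨rfl, rfl⟩ := eq_of_mem_slab hx hy
    rfl

/-- The spaces `RankSpace w` have the same points for all `w`. -/
def relabel (w w' : W) : RankSpace w ≃ RankSpace w' where
  toFun
    | center => center
    | point δ n x => point δ n x
  invFun
    | center => center
    | point δ n x => point δ n x
  left_inv := by rintro (_ | _) <;> rfl
  right_inv := by rintro (_ | _) <;> rfl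

lemma vec_relabel (x : RankSpace w) : vec (relabel w w' x) = vec x := by
  cases x <;> rfl

lemma label_relabel (h : w ≤ w') (x : RankSpace w) :
    label (relabel w w' x) = max w' (label x) := by
  cases x with
  | center => exact (max_eq_left h).symm
  | point δ n x => exact (by rw [← max_assoc, max_eq_left h] : max w' δ = max w' (max w δ))

variable [TopologicalSpace W]

noncomputable instance : TopologicalSpace (RankSpace w) :=
  .induced (fun x => (vec x, label x)) inferInstance

lemma isEmbedding_vec_label : IsEmbedding fun x : RankSpace w => (vec x, label x) :=
  ⟨⟨rfl⟩, fun _ _ h => vec_injective (congrArg Prod.fst h)⟩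

lemma continuous_iff {Z : Type*} [TopologicalSpace Z] {f : Z → RankSpace w} :
    Continuous f ↔ Continuous (vec ∘ f) ∧ Continuous (label ∘ f) :=
  isEmbedding_vec_label.continuous_iff.trans continuous_prodMk

lemma continuous_vec : Continuous (vec : RankSpace w → C00 W) :=
  (continuous_iff.1 continuous_id).1

lemma continuous_label : Continuous (label : RankSpace w → W) :=
  (continuous_iff.1 continuous_id).2

lemma continuous_point (δ : W) (n : ℕ) : Continuous (point δ n : slab δ n → RankSpace w) :=
  continuous_iff.2 ⟨continuous_subtype_val, continuous_const⟩

lemma tendsto_point_add_smul_unit {v : W} (hvw : v ≤ w) {z : RankSpace w}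
    (hz : ∀ γ ≤ v, C00.coord γ (vec z) = 0) (hlabel : label z = w) :
    Tendsto (fun m : ℕ => point v m ⟨vec z + (1 / ((m : ℝ) + 1)) • C00.unit v,
      add_smul_unit_mem_slab hz⟩) atTop (𝓝 z) := by
  have hvec : Tendsto (fun m : ℕ => vec z + (1 / ((m : ℝ) + 1)) • C00.unit v) atTop
      (𝓝 (vec z)) := by
    have hzero : Tendsto (fun m : ℕ => 1 / ((m : ℝ) + 1)) atTop (𝓝 0) :=
      tendsto_one_div_add_atTop_nhds_zero_nat
    simpa using (hzero.smul_const (C00.unit v)).const_add (vec z)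
  rw [isEmbedding_vec_label.tendsto_nhds_iff]
  refine hvec.prodMk_nhds ?_
  rw [hlabel]
  exact tendsto_const_nhds.congr fun _ => (max_eq_left hvw).symm

section Discrete

variable [DiscreteTopology W]

instance : MetrizableSpace (RankSpace w) :=
  isEmbedding_vec_label.metrizableSpace

lemma continuous_relabel (h : w ≤ w') : Continuous (relabel w w') := by
  refine continuous_iff.2 ⟨continuous_vec.congr fun x => (vec_relabel x).symm, ?_⟩
  exact ((continuous_of_discreteTopology (f := max w')).comp continuous_label).congr
    fun x => (label_relabel h x).symm

end Discrete

section QuasiComponent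

variable {A : Set (RankSpace w)} {v δ : W} {n : ℕ} {x : slab δ n}

lemma point_mem_quasiComponentIn_center (hvδ : v < δ) (hδw : δ ≤ w) (hcenter : center ∈ A)
    (hx : point δ n x ∈ A) (hA : ∀ m y, point v m y ∈ A) :
    point δ n x ∈ quasiComponentIn A center :=
  have hvw : v ≤ w := (hvδ.trans_le hδw).le
  mem_quasiComponentIn_of_tendsto hcenter hx
    (tendsto_point_add_smul_unit hvw (fun _ _ => map_zero _) rfl)
    (tendsto_point_add_smul_unit hvw (z := point δ n x)
      (fun γ hγ => x.2.2 γ (hγ.trans_lt hvδ)) (max_eq_left hδw))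
    (fun m => isPreconnected_range (continuous_point v m))
    (fun m => range_subset_iff.2 (hA m)) (fun _ => mem_range_self _) (fun _ => mem_range_self _)

lemma lt_of_point_mem_quasiComponentIn_center
    (hA : ∀ ε m y, point ε m y ∈ A → v ≤ ε) (hx : point δ n x ∈ quasiComponentIn A center) :
    v < δ := by
  have hcoord : Continuous fun z : RankSpace w => C00.coord v (vec z) :=
    (C00.coord v).continuous.comp continuous_vec
  have himage : (fun z : RankSpace w => C00.coord v (vec z)) '' A ⊆
      insert 0 (range fun m : ℕ => 1 / ((m : ℝ) + 1)) := by
    rintro _ ⟨_ | ⟨ε, m, y⟩, hz, rfl⟩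
    · exact Or.inl (map_zero _)
    · rcases (hA ε m y hz).lt_or_eq with hlt | rfl
      · exact Or.inl (y.2.2 v hlt)
      · exact Or.inr ⟨m, y.2.1.symm⟩
  have hzero : C00.coord v (x : C00 W) = 0 :=
    (eq_of_mem_quasiComponentIn_of_countable_image hcoord.continuousOn
      (((countable_range _).insert 0).mono himage) hx).trans (map_zero _)
  refine (hA δ n x hx.1).lt_of_ne ?_
  rintro rfl
  exact coord_ne_zero_of_mem_slab x.2 hzero

variable [WellFoundedLT W]

lemma iteratedQuasiComponent_point_ne_singleton [NoMaxOrder W] :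
    iteratedQuasiComponent (point δ n x : RankSpace w) v ≠ {point δ n x} := by
  obtain ⟨ε, hε⟩ := exists_gt δ
  have hmem : point δ n ⟨_, add_unit_mem_slab x.2 hε⟩ ∈
      iteratedQuasiComponent (point δ n x : RankSpace w) v :=
    subset_iteratedQuasiComponent_of_isPreconnected
      (isPreconnected_range (continuous_point δ n)) (mem_range_self x) v (mem_range_self _)
  intro h
  have hvec := congrArg (C00.coord ε ∘ vec) (iteratedQuasiComponent_eq_singleton_iff.1 h _ hmem)
  simp [vec] at hvec

variable [DiscreteTopology W]

lemma le_of_point_mem_iteratedQuasiComponent_center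
    (hx : point δ n x ∈ iteratedQuasiComponent (center : RankSpace w) v) : δ ≤ w := by
  have hclopen : IsClopen {z : RankSpace w | label z = w} :=
    (isClopen_discrete {w}).preimage continuous_label
  exact max_eq_left_iff.1 (iteratedQuasiComponent_subset_of_isClopen hclopen rfl v hx)

theorem point_mem_iteratedQuasiComponent_center_iff :
    point δ n x ∈ iteratedQuasiComponent (center : RankSpace w) v ↔ v < δ ∧ δ ≤ w := by
  induction v using WellFoundedLT.induction generalizing δ n with
  | ind v ih =>
    refine ⟨fun hx => ⟨?_, le_of_point_mem_iteratedQuasiComponent_center hx⟩,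
      fun ⟨hvδ, hδw⟩ => ?_⟩
    · rw [iteratedQuasiComponent_eq] at hx
      refine lt_of_point_mem_quasiComponentIn_center ?_ hx
      intro ε m y hy
      exact le_of_not_gt fun hε => lt_irrefl ε ((ih ε hε).1 (hy ε hε)).1
    · rw [iteratedQuasiComponent_eq]
      exact point_mem_quasiComponentIn_center hvδ hδw
        (fun u _ => self_mem_iteratedQuasiComponent center u)
        (fun u hu => (ih u hu).2 ⟨hu.trans hvδ, hδw⟩)
        (fun m y u hu => (ih u hu).2 ⟨hu, (hvδ.trans_le hδw).le⟩)

lemma iteratedQuasiComponent_center_eq_singleton_iff :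
    iteratedQuasiComponent (center : RankSpace w) v = {center} ↔ w ≤ v := by
  rw [iteratedQuasiComponent_eq_singleton_iff]
  constructor
  · intro h
    by_contra! hvw
    have hmem : 0 + (1 / (((0 : ℕ) : ℝ) + 1)) • C00.unit w ∈ slab w 0 :=
      add_smul_unit_mem_slab fun γ _ => map_zero _
    cases h (point w 0 ⟨_, hmem⟩) (point_mem_iteratedQuasiComponent_center_iff.2 ⟨hvw, le_rfl⟩)
  · rintro hwv (_ | ⟨δ, n, x⟩) hx
    · rfl
    · obtain ⟨hvδ, hδw⟩ := point_mem_iteratedQuasiComponent_center_iff.1 hx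
      exact absurd (hvδ.trans_le hδw) hwv.not_gt

theorem iteratedQuasiComponent_eq_singleton_iff [NoMaxOrder W] {x : RankSpace w} :
    iteratedQuasiComponent x v = {x} ↔ x = center ∧ w ≤ v := by
  cases x with
  | center => simp [iteratedQuasiComponent_center_eq_singleton_iff]
  | point δ n x => simp [iteratedQuasiComponent_point_ne_singleton]

end QuasiComponent

end RankSpace

/-- The disjoint sum of the spaces `RankSpace (ρ k)`. -/
abbrev RankSum {K : Type*} {W : Type u} [LT W] (ρ : K → W) :=
  Σ k, RankSpace (ρ k)

namespace RankSum

open RankSpace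

variable {K L : Type*} {W : Type u} [LinearOrder W]

lemma mk_snd_eq {K : Type u} (hK : #K = #W) (hW : 𝔠 ≤ #W) :
    #(RankSum (Prod.snd : K × W → W)) = #W := by
  have hinf : ℵ₀ ≤ #W := aleph0_le_continuum.trans hW
  have : Nonempty W := (infinite_iff.2 hinf).nonempty
  have hbase : #(K × W) = #W := by rw [mk_prod, lift_id, lift_id, hK, mul_eq_self hinf]
  apply le_antisymm
  · have hvec : Injective fun z : RankSum (Prod.snd : K × W → W) => (z.1, vec z.2) := by
      rintro ⟨p, x⟩ ⟨q, y⟩ h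
      obtain rfl : p = q := congrArg Prod.fst h
      exact congrArg (Sigma.mk p) (vec_injective (congrArg Prod.snd h))
    have hC00 : #(C00 W) ≤ #W := (C00.mk_le W).trans_eq (max_eq_left hW)
    calc #(RankSum (Prod.snd : K × W → W)) ≤ #((K × W) × C00 W) := mk_le_of_injective hvec
      _ = #W * #(C00 W) := by rw [mk_prod, lift_id, lift_id, hbase]
      _ ≤ #W * #W := by gcongr
      _ = #W := mul_eq_self hinf
  · rw [← hbase]
    exact mk_le_of_injective (f := fun p => (⟨p, center⟩ : RankSum (Prod.snd : K × W → W)))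
      fun _ _ h => congrArg Sigma.fst h

variable [TopologicalSpace W]

lemma exists_isClopen_homeomorph (ρ : K → W) :
    ∃ C : Set (RankSum (Prod.snd : K × W → W)), IsClopen C ∧ Nonempty (RankSum ρ ≃ₜ C) := by
  have hgraph : Injective fun k => (k, ρ k) := fun _ _ h => congrArg Prod.fst h
  have hemb : IsEmbedding (Sigma.map (fun k => (k, ρ k)) (fun _ => id) :
      RankSum ρ → RankSum (Prod.snd : K × W → W)) :=
    (isEmbedding_sigmaMap hgraph).2 fun _ => .id
  exact ⟨_, isClopen_range_sigmaMap _, ⟨hemb.toHomeomorph⟩⟩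

variable [DiscreteTopology W] {ρ : K → W} {ρ' : L → W}

lemma exists_bijective_of_equiv_le (σ : K ≃ L) (hσ : ∀ k, ρ k ≤ ρ' (σ k)) :
    ∃ f : RankSum ρ → RankSum ρ', Continuous f ∧ Bijective f :=
  let e : RankSum ρ ≃ RankSum ρ' := σ.sigmaCongr fun k => relabel (ρ k) (ρ' (σ k))
  have he : Continuous e := Continuous.sigma_map (f₁ := σ) (τ := fun l => RankSpace (ρ' l))
    fun k => continuous_relabel (hσ k)
  ⟨e, he, e.bijective⟩

section QuasiComponent

variable [NoMaxOrder W] [WellFoundedLT W]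

lemma iteratedQuasiComponent_eq_singleton_iff {z : RankSum ρ} {v : W} :
    iteratedQuasiComponent z v = {z} ↔ ∃ k, z = ⟨k, center⟩ ∧ ρ k ≤ v := by
  obtain ⟨k, x⟩ := z
  rw [iteratedQuasiComponent_sigmaMk, ← image_singleton,
    sigma_mk_injective.image_injective.eq_iff, RankSpace.iteratedQuasiComponent_eq_singleton_iff]
  constructor
  · rintro ⟨rfl, hk⟩
    exact ⟨k, rfl, hk⟩
  · rintro ⟨_, h, hk⟩
    cases h
    exact ⟨rfl, hk⟩

lemma iteratedQuasiComponent_center (k : K) :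
    iteratedQuasiComponent (⟨k, center⟩ : RankSum ρ) (ρ k) = {⟨k, center⟩} :=
  iteratedQuasiComponent_eq_singleton_iff.2 ⟨k, rfl, le_rfl⟩

theorem exists_injective_le_of_bijective {f : RankSum ρ → RankSum ρ'} (hf : Continuous f)
    (hbij : Bijective f) : ∃ g : L → K, Injective g ∧ ∀ l, ρ (g l) ≤ ρ' l := by
  have preimage_center (l : L) : ∃ k, f ⟨k, center⟩ = ⟨l, center⟩ ∧ ρ k ≤ ρ' l := by
    obtain ⟨z, hz⟩ := hbij.surjective ⟨l, center⟩
    have hsingleton : iteratedQuasiComponent (f z) (ρ' l) = {f z} :=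
      hz ▸ iteratedQuasiComponent_center l
    obtain ⟨k, rfl, hk⟩ := iteratedQuasiComponent_eq_singleton_iff.1
      (iteratedQuasiComponent_eq_singleton_of_injective hf hbij.injective hsingleton)
    exact ⟨k, hz, hk⟩
  choose g hg hle using preimage_center
  have hinj : Injective g := fun l m hlm =>
    congrArg Sigma.fst ((hg l).symm.trans (hlm ▸ hg m))
  exact ⟨g, hinj, hle⟩

theorem range_subset_of_homeomorph (e : RankSum ρ ≃ₜ RankSum ρ') : range ρ ⊆ range ρ' := by
  rintro _ ⟨k, rfl⟩
  have hsymm : iteratedQuasiComponent (e.symm (e ⟨k, center⟩)) (ρ k) =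
      {e.symm (e ⟨k, center⟩)} := by
    rw [e.symm_apply_apply, iteratedQuasiComponent_center]
  obtain ⟨l, hl, hle⟩ := iteratedQuasiComponent_eq_singleton_iff.1
    (iteratedQuasiComponent_eq_singleton_of_injective e.symm.continuous e.symm.injective hsymm)
  have himage : iteratedQuasiComponent (e ⟨k, center⟩) (ρ' l) = {e ⟨k, center⟩} :=
    hl ▸ iteratedQuasiComponent_center l
  obtain ⟨m, hm, hge⟩ := iteratedQuasiComponent_eq_singleton_iff.1
    (iteratedQuasiComponent_eq_singleton_of_injective e.continuous e.injective himage)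
  obtain rfl : k = m := congrArg Sigma.fst hm
  exact ⟨l, hle.antisymm hge⟩

end QuasiComponent

end RankSum

section Coding

/-- The ranks used to encode quasiorders. The first entry is a block: block `⊥` carries a
down-set, with the membership of each element of `J` in the last entry, and the blocks of the three
signs serve to mark one element of `J`. -/
abbrev CodingRank (J : Type*) := WithBot SignType ×ₗ J ×ₗ Prop

variable {Q J : Type*}

/-- The family of ranks that encodes the element `q` of `Q`, where `ι` embeds `Q` in `J`. In block
`⊥` the down-set of `q` is stored bit by bit; the other blocks hold a bi-infinite sequence of
families of ranks, in which `ι q` is marked at place `0`. -/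
noncomputable def codingRank (ι : Q ↪ J) (le : Q → Q → Prop) (q : Q) : J ⊕ J × ℤ → CodingRank J
  | .inl i => toLex (⊥, toLex (i, ∃ p, ι p = i ∧ le p q))
  | .inr (j, n) => toLex (↑(SignType.sign n), toLex (if n = 0 then ι q else j, False))

variable {ι : Q ↪ J} {le : Q → Q → Prop} {q q' : Q}

lemma eq_of_range_codingRank_subset (h : range (codingRank ι le q) ⊆ range (codingRank ι le q')) :
    q = q' := by
  obtain ⟨i | ⟨j, n⟩, hk⟩ := h (mem_range_self (.inr (ι q, 0)))
  · exact absurd (congrArg Prod.fst hk) WithBot.bot_ne_coe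
  · have hsign : (SignType.sign n : WithBot SignType) = SignType.sign (0 : ℤ) :=
      congrArg Prod.fst hk
    obtain rfl : n = 0 := by simpa using hsign
    exact (ι.injective (congrArg (fun r => (ofLex (ofLex r).2).1) hk)).symm

variable [LinearOrder J]

lemma codingRank_inl_le_inl {i j : J} :
    codingRank ι le q (.inl i) ≤ codingRank ι le q' (.inl j) ↔
      i < j ∨ i = j ∧ ((∃ p, ι p = i ∧ le p q) → ∃ p, ι p = j ∧ le p q') := by
  simp [codingRank, Prod.Lex.toLex_le_toLex]

/- The shift moves the rank marked by `q` to sign `1` and a rank of sign `-1` to the one marked by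
`q'`, so `ι q` and `ι q'` need not be compared. -/
lemma exists_equiv_codingRank_le (htrans : ∀ a b c, le a b → le b c → le a c) (hle : le q q') :
    ∃ σ : J ⊕ J × ℤ ≃ J ⊕ J × ℤ, ∀ k, codingRank ι le q k ≤ codingRank ι le q' (σ k) := by
  refine ⟨(Equiv.refl J).sumCongr ((Equiv.refl J).prodCongr (Equiv.addRight 1)), ?_⟩
  rintro (i | ⟨j, n⟩)
  · exact codingRank_inl_le_inl.2 (.inr ⟨rfl, fun ⟨p, hp, hpq⟩ => ⟨p, hp, htrans p q q' hpq hle⟩⟩)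
  · have hn : n < -1 ∨ n = -1 ∨ n = 0 ∨ 0 < n := by lia
    rcases hn with hn | rfl | rfl | hn
    · have h0 : n < 0 := by lia
      have h1 : n + 1 < 0 := by lia
      simp [codingRank, h0, h1, h0.ne, h1.ne]
    · simp [codingRank, Prod.Lex.toLex_le_toLex]
    · have hsign : (0 : WithBot SignType) < 1 := by decide
      simp [codingRank, Prod.Lex.toLex_le_toLex, hsign]
    · have h1 : 0 < n + 1 := by lia
      simp [codingRank, hn, h1, hn.ne', h1.ne']

lemma eq_self_of_injective_of_forall_le [WellFoundedLT J] {g : J → J} (hg : Injective g)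
    (hle : ∀ i, g i ≤ i) (i : J) : g i = i := by
  induction i using WellFoundedLT.induction with
  | ind i ih => exact (hle i).eq_of_not_lt fun hlt => hlt.ne (hg (ih (g i) hlt))

lemma rel_of_codingRank_comp_le [WellFoundedLT J] (hrefl : le q q) {g : J ⊕ J × ℤ → J ⊕ J × ℤ}
    (hg : Injective g) (hle : ∀ k, codingRank ι le q (g k) ≤ codingRank ι le q' k) : le q q' := by
  have block_bot (i : J) : ∃ i', g (.inl i) = .inl i' ∧ i' ≤ i := by
    have hi := hle (.inl i)
    rcases hgi : g (.inl i) with i' | ⟨j, n⟩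
    · rw [hgi, codingRank_inl_le_inl] at hi
      exact ⟨i', rfl, hi.elim le_of_lt fun h => h.1.le⟩
    · simp [hgi, codingRank, Prod.Lex.toLex_le_toLex] at hi
  choose g' hg' hg'_le using block_bot
  have hg'_inj : Injective g' := fun i j hij =>
    Sum.inl_injective (hg (by rw [hg', hg', hij]))
  have hfix : g (.inl (ι q)) = .inl (ι q) := by
    rw [hg', eq_self_of_injective_of_forall_le hg'_inj hg'_le]
  have hbit := hle (.inl (ι q))
  rw [hfix] at hbit
  simpa [codingRank_inl_le_inl, hrefl] using hbit

lemma mk_codingIndex (J : Type u) [Infinite J] : #(J ⊕ J × ℤ) = #J := by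
  simp [add_eq_self]

lemma mk_codingRank (J : Type u) [Infinite J] : #(CodingRank J) = #J := by
  have hJ : ℵ₀ ≤ #J := aleph0_le_mk J
  have hblock : Fintype.card (WithBot SignType) = 4 := rfl
  calc #(CodingRank J) = #(WithBot SignType × J × Prop) := rfl
    _ = 4 * (#J * 2) := by simp [hblock]
    _ = 4 * #J := by rw [mul_eq_left hJ (ofNat_le_aleph0.trans hJ) two_ne_zero]
    _ = #J := mul_eq_right hJ (ofNat_le_aleph0.trans hJ) four_ne_zero

end Coding

/-- The space in which all quasiorders on sets of at most `#J` elements are represented: a sum of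
rank spaces in which each rank occurs once for every index of the families `codingRank`. -/
abbrev CodingSpace (J : Type u) [LinearOrder J] :=
  RankSum (Prod.snd : (J ⊕ J × ℤ) × CodingRank J → CodingRank J)

lemma mk_codingSpace {J : Type u} [LinearOrder J] (hJ : 𝔠 ≤ #J) : #(CodingSpace J) = #J := by
  have : Infinite J := infinite_iff.2 (aleph0_le_continuum.trans hJ)
  have hrank : #(CodingRank J) = #J := mk_codingRank J
  exact (RankSum.mk_snd_eq ((mk_codingIndex J).trans hrank.symm) (hJ.trans_eq hrank.symm)).trans
    hrank

theorem exists_bijective_codingRank_iff {Q : Type*} {J : Type u} [LinearOrder J] [WellFoundedLT J]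
    [NoMaxOrder J] [TopologicalSpace (CodingRank J)] [DiscreteTopology (CodingRank J)]
    {ι : Q ↪ J} {le : Q → Q → Prop} (hrefl : ∀ q, le q q)
    (htrans : ∀ a b c, le a b → le b c → le a c) {q q' : Q} :
    (∃ f : RankSum (codingRank ι le q) → RankSum (codingRank ι le q'),
      Continuous f ∧ Bijective f) ↔ le q q' := by
  constructor
  · rintro ⟨f, hf, hbij⟩
    obtain ⟨g, hg, hle⟩ := RankSum.exists_injective_le_of_bijective hf hbij
    exact rel_of_codingRank_comp_le (hrefl q) hg hle
  · intro hle
    obtain ⟨σ, hσ⟩ := exists_equiv_codingRank_le (ι := ι) htrans hle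
    exact RankSum.exists_bijective_of_equiv_le σ hσ

lemma exists_continuous_bijective_congr {X X' Y Y' : Type*} [TopologicalSpace X]
    [TopologicalSpace X'] [TopologicalSpace Y] [TopologicalSpace Y'] (e : X ≃ₜ X') (e' : Y ≃ₜ Y') :
    (∃ f : X → Y, Continuous f ∧ Bijective f) ↔ ∃ f : X' → Y', Continuous f ∧ Bijective f :=
  ⟨fun ⟨f, hf, hbij⟩ => ⟨e' ∘ f ∘ e.symm, by fun_prop,
      e'.bijective.comp (hbij.comp e.symm.bijective)⟩,
    fun ⟨f, hf, hbij⟩ => ⟨e'.symm ∘ f ∘ e, by fun_prop,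
      e'.symm.bijective.comp (hbij.comp e.bijective)⟩⟩

theorem representsByContBij_codingSpace (J : Type u) [LinearOrder J] [WellFoundedLT J]
    [NoMaxOrder J] [TopologicalSpace (CodingRank J)] [DiscreteTopology (CodingRank J)] :
    RepresentsByContBij #J (CodingSpace J) := by
  intro Q le hQ hrefl htrans
  obtain ⟨ι⟩ := hQ
  choose C hC hhomeo using fun q => RankSum.exists_isClopen_homeomorph (codingRank ι le q)
  have e (q : Q) : RankSum (codingRank ι le q) ≃ₜ C q := (hhomeo q).some
  refine ⟨C, hC, fun q q' hne => ⟨fun φ => hne ?_⟩, fun q q' => ?_⟩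
  · exact eq_of_range_codingRank_subset
      (RankSum.range_subset_of_homeomorph (((e q).trans φ).trans (e q').symm))
  · rw [← exists_continuous_bijective_congr (e q) (e q'),
      exists_bijective_codingRank_iff hrefl htrans]

theorem statement2 (α : Cardinal.{u}) (hα : Cardinal.continuum ≤ α) :
    ∃ (X : Type u) (tX : TopologicalSpace X),
      @TopologicalSpace.MetrizableSpace X tX ∧ #X = α ∧
      @RepresentsByContBij α X tX := by
  let J := α.ord.ToType
  have hJ : #J = α := mk_ord_toType α
  have : NoMaxOrder J := Cardinal.noMaxOrder (aleph0_le_continuum.trans hα)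
  let _ : TopologicalSpace (CodingRank J) := ⊥
  have : DiscreteTopology (CodingRank J) := ⟨rfl⟩
  refine ⟨CodingSpace J, inferInstance, metrizableSpace_sigma,
    (mk_codingSpace (hα.trans_eq hJ.symm)).trans hJ, ?_⟩
  simpa only [hJ] using representsByContBij_codingSpace J
end

section
/- For every cardinal number α ≥ 𝔠, there exists a metrizable topological space X with |X| = α such that every quasiordered set (Q, ≤) with |Q| ≤ α has a representation by clopen subspaces of X with respect to embeddability onto clopen subspaces; that is, there is a family {X(q) : q ∈ Q} of pairwise non-homeomorphic clopen subsets of X such that q ≤ q' if and only if X(q) is homeomorphic to a clopen subset of X(q'). -/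
universe u

open Cardinal

/-- `A` is homeomorphic to a clopen subset of `B`. -/
def HomeoToClopenSubset (A : Type*) [TopologicalSpace A]
    (B : Type*) [TopologicalSpace B] : Prop :=
  ∃ t : Set B, IsClopen t ∧ Nonempty (A ≃ₜ t)

/-- The representation property of the space `X` for a quasiorder, with respect to
embeddability onto clopen subspaces. -/
def RepresentsByClopenEmb (α : Cardinal.{u}) (X : Type u) [TopologicalSpace X] : Prop :=
  ∀ (Q : Type u) (le : Q → Q → Prop), #Q ≤ α →
    (∀ q, le q q) → (∀ a b c, le a b → le b c → le a c) →
    ∃ Xq : Q → Set X,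
      (∀ q, IsClopen (Xq q)) ∧
      (∀ q q', q ≠ q' → IsEmpty ((Xq q) ≃ₜ (Xq q'))) ∧
      (∀ q q', le q q' ↔ HomeoToClopenSubset (Xq q) (Xq q'))


/-!
Over the label `step n l ε` sits a hedgehog with one arm for every `M ⊆ ℤ` containing `n`, and its
arms `M` converge to the point `tip M l` as `n` runs through `M`. These hedgehogs are the only
nontrivial components. The remaining points are arranged so that the Cantor–Bendixson rank relative
to the trivial components tells the pairs `(l, ε)` apart.

Consequently two clopen embeddings `f` and `g` of the same space match the centers belonging to
`(l, ε)` in the range of `f` with those in the range of `g`. Suppose that `f` covers all points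
whose label starts at `peak l`. The tips record, for every infinite `S ⊆ ℕ`, the hedgehogs with
index in `S` up to finitely many, and they serve `ε = true` and `ε = false` at the same time.
So the matchings for the two values of `ε` differ by an injection `ℕ → ℕ` that preserves every
infinite set up to finitely many elements, which forces it to be surjective: if `g` misses no
center for `true`, then it misses none for `false`.

The element `q` is represented by the blocks of all `p ≤ q`, where for `p ≠ q` one hedgehog
belonging to `false` is left out; this asymmetry makes `q` recognizable. Shifting all indices by
one embeds full blocks into defective ones, so that `q ≤ q'` still yields a clopen embedding.
-/

section

open Set Filter Topology Function BoundedContinuousFunction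

section AlmostInvariant

variable {α : Type*} {h : α → α}

theorem exists_infinite_disjoint_image (hinj : Injective h) (hinf : {a | h a ≠ a}.Infinite) :
    ∃ M : Set α, M.Infinite ∧ Disjoint M (h '' M) := by
  let r (x y : α) : Prop := x ≠ y ∧ h x ≠ y ∧ h y ≠ x
  have : Std.Symm r := ⟨fun x y ⟨hxy, hx, hy⟩ => ⟨hxy.symm, hy, hx⟩⟩
  obtain ⟨f, hmoved, hr⟩ := exists_seq_of_forall_finset_exists' (fun a => h a ≠ a) r fun s _ => by
    have havoid : (↑s ∪ h '' s ∪ h ⁻¹' s : Set α).Finite :=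
      (s.finite_toSet.union (s.finite_toSet.image h)).union (s.finite_toSet.preimage hinj.injOn)
    obtain ⟨y, hy, hys⟩ := (hinf.sdiff havoid).nonempty
    refine ⟨y, hy, fun x hx => ⟨?_, ?_, ?_⟩⟩
    · rintro rfl
      exact hys (.inl (.inl hx))
    · rintro rfl
      exact hys (.inl (.inr (mem_image_of_mem h hx)))
    · rintro rfl
      exact hys (.inr hx)
  refine ⟨range f, infinite_range_of_injective (injective_iff_pairwise_ne.2 fun i j hij =>
    (hr hij).1), disjoint_left.2 ?_⟩
  rintro _ ⟨j, rfl⟩ ⟨_, ⟨i, rfl⟩, hij⟩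
  rcases eq_or_ne i j with rfl | hne
  · exact hmoved i hij
  · exact (hr hne).2.1 hij

theorem surjective_of_finite_setOf_ne (hinj : Injective h) (hfin : {a | h a ≠ a}.Finite) :
    Surjective h := by
  have hmaps : MapsTo h {a | h a ≠ a} {a | h a ≠ a} := fun _ ha => hinj.ne ha
  intro a
  by_cases ha : h a = a
  · exact ⟨a, ha⟩
  · obtain ⟨b, -, hb⟩ := ((hfin.injOn_iff_bijOn_of_mapsTo hmaps).1 hinj.injOn).surjOn ha
    exact ⟨b, hb⟩

theorem surjective_of_almost_invariant (hinj : Injective h)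
    (hinv : ∀ M : Set α, M.Infinite → ∀ᶠ a in cofinite, a ∈ M → h a ∈ M) : Surjective h := by
  refine surjective_of_finite_setOf_ne hinj (not_infinite.1 fun hinf => ?_)
  obtain ⟨M, hM, hdisj⟩ := exists_infinite_disjoint_image hinj hinf
  refine hM ((hinv M hM).subset fun a ha hmaps => ?_)
  exact disjoint_left.1 hdisj (hmaps ha) (mem_image_of_mem h ha)

end AlmostInvariant

/-- A clopen embedding is a homeomorphism onto a clopen subset of the codomain. -/
structure IsClopenEmbedding {X Y : Type*} [TopologicalSpace X] [TopologicalSpace Y]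
    (f : X → Y) : Prop extends IsEmbedding f where
  isClopen_range : IsClopen (range f)

/-- The points of a space that form a connected component by themselves. -/
def trivialComponents (X : Type*) [TopologicalSpace X] : Set X :=
  {x | connectedComponent x = {x}}

/-- The connected components of the points `c i` come arbitrarily close to `y` along `F`. -/
def ComponentsTendTo {ι Y : Type*} [TopologicalSpace Y] (F : Filter ι) (c : ι → Y) (y : Y) :
    Prop :=
  ∀ U ∈ 𝓝 y, ∀ᶠ i in F, (connectedComponent (c i) ∩ U).Nonempty

namespace IsClopenEmbedding

variable {X Y Z ι : Type*} [TopologicalSpace X] [TopologicalSpace Y] [TopologicalSpace Z]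
  {f : X → Y} {g : Y → Z} {A : Set X} {B : Set Y} {F : Filter ι} {c : ι → X} {x : X}

theorem isOpenEmbedding (hf : IsClopenEmbedding f) : IsOpenEmbedding f :=
  ⟨hf.toIsEmbedding, hf.isClopen_range.isOpen⟩

theorem isClosedEmbedding (hf : IsClopenEmbedding f) : IsClosedEmbedding f :=
  ⟨hf.toIsEmbedding, hf.isClopen_range.isClosed⟩

theorem isClopen_image (hf : IsClopenEmbedding f) (hA : IsClopen A) : IsClopen (f '' A) :=
  ⟨hf.isClosedEmbedding.isClosedMap A hA.isClosed, hf.isOpenEmbedding.isOpenMap A hA.isOpen⟩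

theorem comp (hg : IsClopenEmbedding g) (hf : IsClopenEmbedding f) :
    IsClopenEmbedding (g ∘ f) :=
  ⟨hg.toIsEmbedding.comp hf.toIsEmbedding, range_comp g f ▸ hg.isClopen_image hf.isClopen_range⟩

theorem of_homeomorph (e : X ≃ₜ Y) : IsClopenEmbedding e :=
  ⟨e.isEmbedding, e.range_coe ▸ isClopen_univ⟩

theorem subtypeVal (hA : IsClopen A) : IsClopenEmbedding ((↑) : A → X) :=
  ⟨.subtypeVal, Subtype.range_coe ▸ hA⟩

theorem mapsToRestrict (hf : IsClopenEmbedding f) (hA : IsClopen A) (hAB : MapsTo f A B) :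
    IsClopenEmbedding (hAB.restrict f A B) := by
  refine ⟨hf.toIsEmbedding.restrict hAB, ?_⟩
  rw [hAB.range_restrict]
  exact (hf.isClopen_image hA).preimage continuous_subtype_val

theorem image_connectedComponent (hf : IsClopenEmbedding f) (x : X) :
    f '' connectedComponent x = connectedComponent (f x) := by
  have hrange : connectedComponent (f x) ⊆ range f :=
    hf.isClopen_range.connectedComponent_subset (mem_range_self x)
  refine (hf.continuous.image_connectedComponent_subset x).antisymm ?_
  rw [← image_preimage_eq_of_subset hrange]
  exact image_mono ((isPreconnected_connectedComponent.preimage_of_isOpenMap hf.injective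
    hf.isOpenEmbedding.isOpenMap hrange).subset_connectedComponent mem_connectedComponent)

theorem preimage_trivialComponents (hf : IsClopenEmbedding f) :
    f ⁻¹' trivialComponents Y = trivialComponents X := by
  ext x
  change connectedComponent (f x) = {f x} ↔ connectedComponent x = {x}
  rw [← hf.image_connectedComponent, ← image_singleton, hf.injective.image_injective.eq_iff]

theorem componentsTendTo_comp_iff (hf : IsClopenEmbedding f) :
    ComponentsTendTo F (f ∘ c) (f x) ↔ ComponentsTendTo F c x := by
  have hnonempty (i : ι) (U : Set Y) : (connectedComponent (f (c i)) ∩ U).Nonempty ↔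
      (connectedComponent (c i) ∩ f ⁻¹' U).Nonempty := by
    rw [← hf.image_connectedComponent, ← image_inter_preimage, image_nonempty]
  constructor
  · intro h U hU
    filter_upwards [h (f '' U) (hf.isOpenEmbedding.image_mem_nhds.2 hU)] with i hi
    simpa only [comp_apply, hnonempty, preimage_image_eq U hf.injective] using hi
  · intro h U hU
    filter_upwards [h _ (hf.continuous.continuousAt.preimage_mem_nhds hU)] with i hi
    exact (hnonempty i U).2 hi

end IsClopenEmbedding

theorem homeoToClopenSubset_iff_exists_isClopenEmbedding {A B : Type*} [TopologicalSpace A]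
    [TopologicalSpace B] : HomeoToClopenSubset A B ↔ ∃ f : A → B, IsClopenEmbedding f := by
  constructor
  · rintro ⟨t, ht, ⟨e⟩⟩
    exact ⟨_, (IsClopenEmbedding.subtypeVal ht).comp (.of_homeomorph e)⟩
  · rintro ⟨f, hf⟩
    exact ⟨range f, hf.isClopen_range, ⟨hf.toIsEmbedding.toHomeomorph⟩⟩

theorem ComponentsTendTo.tendsto_comp {ι Y T : Type*} [TopologicalSpace Y] [TopologicalSpace T]
    [TotallyDisconnectedSpace T] {F : Filter ι} {c : ι → Y} {y : Y} (h : ComponentsTendTo F c y)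
    {φ : Y → T} (hφ : Continuous φ) : Tendsto (φ ∘ c) F (𝓝 (φ y)) := by
  refine tendsto_def.2 fun U hU => ?_
  filter_upwards [h (φ ⁻¹' U) (hφ.continuousAt.preimage_mem_nhds hU)] with i ⟨z, hz, hzU⟩
  have hzc : φ z = φ (c i) := by
    simpa only [hφ.image_connectedComponent_eq_singleton, mem_singleton_iff]
      using mem_image_of_mem φ hz
  simpa only [mem_preimage, comp_apply, hzc] using hzU

/-- `ρ` is the Cantor–Bendixson rank of the points of `X` relative to `S`: it is determined by
the rule that `ρ x` is the least rank not attained arbitrarily close to `x` by other points of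
`S`. -/
structure IsCantorBendixsonRank {X W : Type*} [TopologicalSpace X] [LT W] (S : Set X)
    (ρ : X → W) : Prop where
  eventually_lt : ∀ x, ∀ᶠ y in 𝓝[≠] x, y ∈ S → ρ y < ρ x
  frequently_eq : ∀ x, ∀ r < ρ x, ∃ᶠ y in 𝓝 x, y ∈ S ∧ ρ y = r

namespace IsCantorBendixsonRank

variable {X Y W : Type*} [TopologicalSpace X] [TopologicalSpace Y] {S : Set Y}

theorem comp_isOpenEmbedding [LT W] {ρ : Y → W} (hρ : IsCantorBendixsonRank S ρ) {f : X → Y}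
    (hf : IsOpenEmbedding f) : IsCantorBendixsonRank (f ⁻¹' S) (ρ ∘ f) where
  eventually_lt x := by
    refine tendsto_nhdsWithin_iff.2 ⟨?_, ?_⟩ |>.eventually (hρ.eventually_lt (f x))
    · exact hf.continuous.continuousAt.mono_left nhdsWithin_le_nhds
    · exact eventually_mem_nhdsWithin.mono fun y hy => hf.injective.ne hy
  frequently_eq x r hr := by
    have := hρ.frequently_eq (f x) r hr
    rwa [← hf.map_nhds_eq, frequently_map] at this

variable [LinearOrder W] [WellFoundedLT W] {ρ ρ' : Y → W}

theorem le (hρ : IsCantorBendixsonRank S ρ) (hρ' : IsCantorBendixsonRank S ρ') (x : Y) :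
    ρ x ≤ ρ' x := by
  suffices ∀ r x, ρ' x = r → ρ x ≤ r from this _ x rfl
  intro r
  induction r using WellFoundedLT.induction with
  | ind r ih =>
    rintro x rfl
    by_contra! hlt
    have hevent : ∀ᶠ y in 𝓝 x, y ≠ x → y ∈ S → ρ' y < ρ' x :=
      eventually_nhdsWithin_iff.1 (hρ'.eventually_lt x)
    obtain ⟨y, ⟨hyS, hy⟩, hy'⟩ := ((hρ.frequently_eq x _ hlt).and_eventually hevent).exists
    have hlt' : ρ' y < ρ' x := hy' (by rintro rfl; exact hlt.ne hy.symm) hyS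
    exact (ih _ hlt' y rfl).not_gt (hy ▸ hlt')

theorem eq (hρ : IsCantorBendixsonRank S ρ) (hρ' : IsCantorBendixsonRank S ρ') : ρ = ρ' :=
  funext fun x => (hρ.le hρ' x).antisymm (hρ'.le hρ x)

theorem comp_eq_comp (hρ : IsCantorBendixsonRank (trivialComponents Y) ρ)
    {f g : X → Y} (hf : IsClopenEmbedding f) (hg : IsClopenEmbedding g) : ρ ∘ f = ρ ∘ g := by
  have hρf := hρ.comp_isOpenEmbedding hf.isOpenEmbedding
  have hρg := hρ.comp_isOpenEmbedding hg.isOpenEmbedding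
  rw [hf.preimage_trivialComponents] at hρf
  rw [hg.preimage_trivialComponents] at hρg
  exact hρf.eq hρg

end IsCantorBendixsonRank

/-- The values of the labels below, which double as Cantor–Bendixson ranks: for every `l : L`
three consecutive values `foot l false < foot l true < peak l`, and one value below all others. -/
def Level (L : Type*) : Type _ := WithBot (L ×ₗ WithTop Bool)

namespace Level

variable {L : Type*}

noncomputable instance [LinearOrder L] : LinearOrder (Level L) :=
  inferInstanceAs (LinearOrder (WithBot (L ×ₗ WithTop Bool)))

instance [LinearOrder L] [WellFoundedLT L] : WellFoundedLT (Level L) :=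
  inferInstanceAs (WellFoundedLT (WithBot (L ×ₗ WithTop Bool)))

instance [LinearOrder L] : OrderBot (Level L) :=
  inferInstanceAs (OrderBot (WithBot (L ×ₗ WithTop Bool)))

instance : TopologicalSpace (Level L) := ⊥

instance : DiscreteTopology (Level L) := ⟨rfl⟩

/-- The largest of the three levels belonging to `l`. -/
def peak (l : L) : Level L := WithBot.some (toLex (l, ⊤))

/-- The two smaller levels belonging to `l`. -/
def foot (l : L) (ε : Bool) : Level L := WithBot.some (toLex (l, ↑ε))

variable {l l' : L} {ε ε' : Bool}

theorem peak_injective : Injective (peak : L → Level L) := fun _ _ h =>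
  congr_arg Prod.fst (WithBot.coe_injective h)

theorem foot_inj : foot l ε = foot l' ε' ↔ l = l' ∧ ε = ε' :=
  WithBot.coe_injective.eq_iff.trans <| toLex_inj.trans <| by
    simp only [Prod.mk_inj, WithTop.coe_inj]

theorem foot_ne_peak : foot l ε ≠ peak l' := fun h =>
  WithTop.coe_ne_top (congr_arg Prod.snd (WithBot.coe_injective h))

theorem peak_ne_bot [LinearOrder L] : peak l ≠ ⊥ := WithBot.coe_ne_bot

theorem foot_ne_bot [LinearOrder L] : foot l ε ≠ ⊥ := WithBot.coe_ne_bot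

theorem foot_lt_peak [LinearOrder L] : foot l ε < peak l :=
  WithBot.coe_lt_coe.2 (Prod.Lex.toLex_lt_toLex.2 (.inr ⟨rfl, WithTop.coe_lt_top ε⟩))

/-- The sequence that drops from `peak l` to `foot l ε` after the index `n`. -/
def step (n : ℕ) (l : L) (ε : Bool) : ℕ → Level L :=
  fun j => if j ≤ n then peak l else foot l ε

/-- The sequences of the form `step n l ε`. -/
def IsStep (x : ℕ → Level L) : Prop := ∃ n l ε, x = step n l ε

variable {m n j : ℕ}

theorem step_apply_of_le (h : j ≤ n) : step n l ε j = peak l := if_pos h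

theorem step_apply_of_lt (h : n < j) : step n l ε j = foot l ε := if_neg h.not_ge

theorem step_apply_zero (n : ℕ) (l : L) (ε : Bool) : step n l ε 0 = peak l :=
  step_apply_of_le n.zero_le

theorem step_apply_eq_peak_iff : step n l ε j = peak l ↔ j ≤ n := by
  refine ⟨fun h => ?_, step_apply_of_le⟩
  by_contra! hj
  exact foot_ne_peak ((step_apply_of_lt hj).symm.trans h)

theorem antitone_step [LinearOrder L] : Antitone (step n l ε) := by
  intro i j hij
  by_cases hi : i ≤ n
  · rw [step_apply_of_le hi, step]
    split_ifs
    exacts [le_rfl, foot_lt_peak.le]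
  · rw [step_apply_of_lt (not_le.1 hi), step_apply_of_lt ((not_le.1 hi).trans_le hij)]

theorem step_ne_const_peak : step n l ε ≠ const ℕ (peak l') := fun h =>
  foot_ne_peak ((step_apply_of_lt n.lt_succ_self).symm.trans (congr_fun h (n + 1)))

theorem step_inj : step m l ε = step n l' ε' ↔ m = n ∧ l = l' ∧ ε = ε' := by
  refine ⟨fun h => ?_, by rintro ⟨rfl, rfl, rfl⟩; rfl⟩
  obtain rfl : l = l' := peak_injective <| by simpa only [step_apply_zero] using congr_fun h 0
  have hmn : m = n := eq_of_forall_le_iff fun j => by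
    rw [← step_apply_eq_peak_iff (l := l) (ε := ε), h, step_apply_eq_peak_iff]
  have hfoot : foot l ε = foot l ε' := by
    simpa only [hmn, step_apply_of_lt n.lt_succ_self] using congr_fun h (n + 1)
  exact ⟨hmn, rfl, (foot_inj.1 hfoot).2⟩

theorem step_comp_pred : (fun j => step n l ε (j - 1)) = step (n + 1) l ε := by
  simp only [step, Nat.sub_le_iff_le_add]
  rfl

theorem step_comp_succ : (fun j => step (n + 1) l ε (j + 1)) = step n l ε := by
  simp only [step, add_le_add_iff_right]
  rfl

theorem tendsto_step : Tendsto (fun n => step n l ε) atTop (𝓝 (const ℕ (peak l))) := by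
  refine tendsto_pi_nhds.2 fun j => tendsto_nhds_of_eventually_eq ?_
  filter_upwards [eventually_ge_atTop j] with n hn
  exact step_apply_of_le hn

/-- The sequence that follows `x` up to the index `k` and is equal to `r` afterwards. -/
def cutoff (x : ℕ → Level L) (k : ℕ) (r : Level L) : ℕ → Level L :=
  fun j => if j ≤ k then x j else r

variable {x : ℕ → Level L} {r : Level L} {k : ℕ}

theorem cutoff_apply_of_le (h : j ≤ k) : cutoff x k r j = x j := if_pos h

theorem cutoff_apply_of_lt (h : k < j) : cutoff x k r j = r := if_neg h.not_ge

theorem tendsto_cutoff : Tendsto (fun k => cutoff x k r) atTop (𝓝 x) := by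
  refine tendsto_pi_nhds.2 fun j => tendsto_nhds_of_eventually_eq ?_
  filter_upwards [eventually_ge_atTop j] with k hk
  exact cutoff_apply_of_le hk

theorem antitone_cutoff [LinearOrder L] (hx : Antitone x) (hr : ∀ j, r ≤ x j) :
    Antitone (cutoff x k r) := by
  intro i j hij
  by_cases hj : j ≤ k
  · rw [cutoff_apply_of_le hj, cutoff_apply_of_le (hij.trans hj)]
    exact hx hij
  · rw [cutoff_apply_of_lt (not_le.1 hj), cutoff]
    split_ifs
    exacts [hr i, le_rfl]

theorem cutoff_ne_const (hr : x 0 ≠ r) (s : Level L) : cutoff x k r ≠ const ℕ s := by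
  intro h
  have h₀ : x 0 = s := (cutoff_apply_of_le k.zero_le).symm.trans (congr_fun h 0)
  have h₁ : r = s := (cutoff_apply_of_lt k.lt_succ_self).symm.trans (congr_fun h (k + 1))
  exact hr (h₀.trans h₁.symm)

theorem eventually_not_isStep_cutoff (hx : ∀ l, x ≠ const ℕ (peak l)) (hr : ∀ j, x j ≠ r) :
    ∀ᶠ k in atTop, ¬ IsStep (cutoff x k r) := by
  obtain ⟨i, hi⟩ : ∃ i, ∀ l, x 0 = peak l → x i ≠ peak l := by
    by_cases h : ∃ l, x 0 = peak l
    · obtain ⟨l, hl⟩ := h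
      obtain ⟨i, hi⟩ := Function.ne_iff.1 (hx l)
      exact ⟨i, fun l' hl' => by rwa [← hl', hl]⟩
    · exact ⟨0, fun l hl => absurd ⟨l, hl⟩ h⟩
  filter_upwards [eventually_ge_atTop i] with k hk
  rintro ⟨n, l, ε, h⟩
  have hstep : ∀ j ≤ k, x j = step n l ε j := fun j hj => by rw [← h, cutoff_apply_of_le hj]
  have hni : n < i := by
    by_contra! hin
    exact hi l ((hstep 0 k.zero_le).trans (step_apply_zero n l ε))
      ((hstep i hk).trans (step_apply_of_le hin))
  refine hr i ?_
  rw [hstep i hk, step_apply_of_lt hni, ← step_apply_of_lt (hni.trans_le (hk.trans k.le_succ)),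
    ← h, cutoff_apply_of_lt k.lt_succ_self]

end Level

/-- Names for the arms of the hedgehogs: the arm `M` occurs at the `n`-th center iff `n ∈ M`.
Subsets of `ℤ` are used so that translating `M` by one is a permutation. -/
def ArmIndex : Type := Set ℤ

namespace ArmIndex

instance : Membership ℤ ArmIndex := inferInstanceAs (Membership ℤ (Set ℤ))

instance : TopologicalSpace ArmIndex := ⊥

instance : DiscreteTopology ArmIndex := ⟨rfl⟩

/-- The translation `M ↦ M + 1`. -/
def shift : ArmIndex ≃ ArmIndex := Equiv.Set.congr (Equiv.addRight 1)

theorem mem_shift_iff {M : ArmIndex} {n : ℤ} : n + 1 ∈ shift M ↔ n ∈ M :=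
  (add_left_injective (1 : ℤ)).mem_set_image

theorem mem_symm_shift_iff {M : ArmIndex} {n : ℤ} : n ∈ shift.symm M ↔ n + 1 ∈ M := by
  rw [← mem_shift_iff, Equiv.apply_symm_apply]

end ArmIndex

/-- The unit vector in the direction of the arm `M`. -/
noncomputable def spine (M : ArmIndex) : ArmIndex →ᵇ ℝ :=
  .indicator {M} (isClopen_discrete _)

/-- The permutation of the coordinates by `e`. -/
noncomputable def permute (e : ArmIndex ≃ ArmIndex) (v : ArmIndex →ᵇ ℝ) : ArmIndex →ᵇ ℝ :=
  v.compContinuous ⟨e.symm, continuous_of_discreteTopology⟩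

theorem spine_self (M : ArmIndex) : spine M M = 1 :=
  indicator_of_mem (mem_singleton M) _

theorem spine_of_ne {M N : ArmIndex} (h : N ≠ M) : spine M N = 0 :=
  indicator_of_notMem (s := {M}) h _

theorem eq_of_smul_spine_apply_ne_zero {t : ℝ} {M N : ArmIndex} (h : (t • spine M) N ≠ 0) :
    N = M := by
  contrapose! h
  rw [BoundedContinuousFunction.smul_apply, spine_of_ne h, smul_zero]

theorem spine_ne_zero (M : ArmIndex) : spine M ≠ 0 := fun h =>
  one_ne_zero (α := ℝ) <| by rw [← spine_self M, h]; rfl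

theorem permute_spine (e : ArmIndex ≃ ArmIndex) (M : ArmIndex) :
    permute e (spine M) = spine (e M) := by
  ext N
  change spine M (e.symm N) = spine (e M) N
  by_cases h : N = e M
  · rw [h, e.symm_apply_apply, spine_self, spine_self]
  · rw [spine_of_ne h, spine_of_ne (mt e.symm_apply_eq.1 h)]

theorem permute_smul (e : ArmIndex ≃ ArmIndex) (t : ℝ) (v : ArmIndex →ᵇ ℝ) :
    permute e (t • v) = t • permute e v := rfl

theorem permute_symm_permute (e : ArmIndex ≃ ArmIndex) (v : ArmIndex →ᵇ ℝ) :
    permute e.symm (permute e v) = v := by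
  ext N
  exact congr_arg v (e.symm_apply_apply N)

theorem continuous_permute (e : ArmIndex ≃ ArmIndex) : Continuous (permute e) :=
  BoundedContinuousFunction.continuous_compContinuous _

section Prolong

variable {Ω : Type*}

/-- Prolongs a label by repeating its first entry, and renames the arms so that they stay at the
same hedgehog. -/
noncomputable def prolong (z : (ArmIndex →ᵇ ℝ) × (ℕ → Ω)) : (ArmIndex →ᵇ ℝ) × (ℕ → Ω) :=
  (permute ArmIndex.shift z.1, fun j => z.2 (j - 1))

/-- Removes the first entry of a label, and renames the arms so that they stay at the same
hedgehog. -/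
noncomputable def shorten (z : (ArmIndex →ᵇ ℝ) × (ℕ → Ω)) : (ArmIndex →ᵇ ℝ) × (ℕ → Ω) :=
  (permute ArmIndex.shift.symm z.1, fun j => z.2 (j + 1))

theorem isEmbedding_prolong [TopologicalSpace Ω] : IsEmbedding (prolong (Ω := Ω)) := by
  refine LeftInverse.isEmbedding (f := shorten) (fun z => ?_) ?_ ?_
  · exact Prod.ext (permute_symm_permute _ _) rfl
  · exact ((continuous_permute _).comp continuous_fst).prodMk (by fun_prop)
  · exact ((continuous_permute _).comp continuous_fst).prodMk (by fun_prop)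

end Prolong

section Cardinality

theorem mk_setOf_antitone_le {W : Type u} [LinearOrder W] [WellFoundedLT W] [Infinite W] :
    #{x : ℕ → W | Antitone x} ≤ #W := by
  let decode (p : List W × W) (j : ℕ) : W := p.1.getD j p.2
  have hsub : {x : ℕ → W | Antitone x} ⊆ range decode := fun x hx => by
    obtain ⟨k, hk⟩ := WellFoundedLT.antitone_chain_condition hx
    refine ⟨((List.range k).map x, x k), funext fun j => ?_⟩
    change ((List.range k).map x).getD j (x k) = x j
    rcases lt_or_ge j k with hj | hj
    · rw [List.getD_eq_getElem _ _ (by simpa using hj), List.getElem_map, List.getElem_range]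
    · rw [List.getD_eq_default _ _ (by simpa using hj), hk j hj]
  calc #{x : ℕ → W | Antitone x} ≤ #(List W × W) := (mk_le_mk_of_subset hsub).trans mk_range_le
    _ = #W := by rw [mk_prod, lift_id, lift_id, mk_list_eq_mk, mul_eq_self (aleph0_le_mk W)]

theorem mk_level_le {L : Type u} [Infinite L] : #(Level L) ≤ #L := by
  have hL := aleph0_le_mk L
  calc #(Level L) = #L * lift.{u} #(Option Bool) + 1 := by
        rw [show #(Level L) = #(Option (L × Option Bool)) from rfl, mk_option, mk_prod, lift_uzero]
    _ ≤ #L := add_le_of_le hL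
      (mul_le_of_le hL le_rfl ((lift_le_aleph0.2 mk_le_aleph0).trans hL))
      (one_le_aleph0.trans hL)

end Cardinality

section Space

open Level

variable {L : Type u}

/-- The position and the label of the points of the space. Over an antitone `x` that is neither a
step nor constantly a peak there is the single point with position `0`; over `step n l ε` there is
a hedgehog, consisting of one segment `[0, spine M]` for every `M` containing `n`; and over the
constant label `peak l` there are the limits of the hedgehog arms. The label alone forces the
convergence of hedgehogs, as `step n l ε` tends to the constant sequence `peak l`. -/
inductive IsPoint [LinearOrder L] : (ArmIndex →ᵇ ℝ) × (ℕ → Level L) → Prop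
  | skeleton (x : ℕ → Level L) (hanti : Antitone x) (hpeak : ∀ l, x ≠ const ℕ (peak l)) :
    IsPoint (0, x)
  | arm (M : ArmIndex) (n : ℕ) (hn : (n : ℤ) ∈ M) (l : L) (ε : Bool) (t : unitInterval) :
    IsPoint ((t : ℝ) • spine M, step n l ε)
  | tip (M : ArmIndex) (l : L) : IsPoint (spine M, const ℕ (peak l))

variable (L) in
/-- The space representing all quasiorders on sets that embed into `L`. -/
def HedgehogSpace [LinearOrder L] : Type u :=
  {z : (ArmIndex →ᵇ ℝ) × (ℕ → Level L) // IsPoint z}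

namespace HedgehogSpace

variable [LinearOrder L] {l : L} {ε : Bool} {M : ArmIndex} {m n : ℕ} {z w : HedgehogSpace L}

noncomputable instance : TopologicalSpace (HedgehogSpace L) := instTopologicalSpaceSubtype

instance : TopologicalSpace.MetrizableSpace (HedgehogSpace L) :=
  IsEmbedding.subtypeVal.metrizableSpace

/-- The position of a point on its hedgehog. -/
def vec (z : HedgehogSpace L) : ArmIndex →ᵇ ℝ := z.1.1

/-- The label of a point, which is constant on connected components. -/
def label (z : HedgehogSpace L) : ℕ → Level L := z.1.2

@[fun_prop]
theorem continuous_vec : Continuous (vec : HedgehogSpace L → _) :=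
  continuous_fst.comp continuous_subtype_val

@[fun_prop]
theorem continuous_label : Continuous (label : HedgehogSpace L → _) :=
  continuous_snd.comp continuous_subtype_val

theorem isClopen_setOf_label_eq (k : ℕ) (r : Level L) :
    IsClopen {z : HedgehogSpace L | label z k = r} :=
  (isClopen_discrete {r}).preimage (continuous_apply k |>.comp continuous_label)

@[ext]
theorem ext (hvec : vec z = vec w) (hlabel : label z = label w) : z = w :=
  Subtype.ext (Prod.ext hvec hlabel)

/-- The center of the `n`-th hedgehog belonging to `l` and `ε`. -/
def center (n : ℕ) (l : L) (ε : Bool) : HedgehogSpace L :=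
  ⟨(0, step n l ε), .skeleton _ antitone_step fun _ => step_ne_const_peak⟩

/-- The parametrization of the arm `M` of the `n`-th hedgehog belonging to `l` and `ε`. -/
noncomputable def arm (n : ℕ) (hn : (n : ℤ) ∈ M) (l : L) (ε : Bool) (t : unitInterval) :
    HedgehogSpace L :=
  ⟨((t : ℝ) • spine M, step n l ε), .arm M n hn l ε t⟩

/-- The limit of the arms `M` of the hedgehogs belonging to `l`. -/
noncomputable def tip (M : ArmIndex) (l : L) : HedgehogSpace L :=
  ⟨(spine M, const ℕ (peak l)), .tip M l⟩

theorem antitone_label (z : HedgehogSpace L) : Antitone (label z) := by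
  obtain ⟨_, h⟩ := z
  cases h with
  | skeleton x hanti => exact hanti
  | arm => exact antitone_step
  | tip => exact antitone_const

theorem label_ne_const_peak (hz : vec z = 0) (l : L) : label z ≠ const ℕ (peak l) := by
  obtain ⟨_, h⟩ := z
  cases h with
  | skeleton x _ hpeak => exact hpeak l
  | arm => exact step_ne_const_peak
  | tip M => exact absurd hz (spine_ne_zero M)

theorem exists_eq_tip_of_label_eq (h : label z = const ℕ (peak l)) : ∃ M, z = tip M l := by
  obtain ⟨_, hz⟩ := z
  cases hz with
  | skeleton x _ hpeak => exact absurd h (hpeak l)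
  | arm => exact absurd h step_ne_const_peak
  | tip M l' =>
    obtain rfl := peak_injective (congr_fun h 0)
    exact ⟨M, rfl⟩

theorem exists_eq_arm_of_label_eq (h : label z = step n l ε) :
    ∃ M, ∃ hn : (n : ℤ) ∈ M, ∃ t, z = arm n hn l ε t := by
  obtain ⟨_, hz⟩ := z
  cases hz with
  | skeleton x =>
    refine ⟨({(n : ℤ)} : Set ℤ), mem_singleton _, 0, ext ?_ h⟩
    exact (zero_smul ℝ _).symm
  | arm M n' hn' l' ε' t =>
    obtain ⟨rfl, rfl, rfl⟩ := step_inj.1 h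
    exact ⟨M, hn', t, rfl⟩
  | tip => exact absurd h.symm step_ne_const_peak

theorem exists_eq_tip_of_vec_apply_ne_zero (hM : vec z M ≠ 0) (hstep : ¬ IsStep (label z)) :
    ∃ l, z = tip M l := by
  obtain ⟨_, hz⟩ := z
  cases hz with
  | skeleton => exact absurd rfl hM
  | arm _ n _ l ε => exact absurd ⟨n, l, ε, rfl⟩ hstep
  | tip N l =>
    obtain rfl : M = N := eq_of_smul_spine_apply_ne_zero (t := 1) (by rwa [one_smul])
    exact ⟨l, rfl⟩

theorem center_inj {l' : L} {ε' : Bool} :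
    center m l ε = center n l' ε' ↔ m = n ∧ l = l' ∧ ε = ε' :=
  ⟨fun h => step_inj.1 (congr_arg label h), by rintro ⟨rfl, rfl, rfl⟩; rfl⟩

theorem continuous_arm (hn : (n : ℤ) ∈ M) : Continuous (arm n hn l ε) :=
  Continuous.subtype_mk (by fun_prop) _

theorem label_eq_of_mem_connectedComponent (h : w ∈ connectedComponent z) :
    label w = label z := by
  simpa only [continuous_label.image_connectedComponent_eq_singleton, mem_singleton_iff]
    using mem_image_of_mem label h

theorem connectedComponent_center (n : ℕ) (l : L) (ε : Bool) :
    connectedComponent (center n l ε) = {z | label z = step n l ε} := by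
  refine Subset.antisymm (fun z hz => label_eq_of_mem_connectedComponent hz) ?_
  refine IsPreconnected.subset_connectedComponent ?_ rfl
  refine isPreconnected_of_forall (center n l ε) fun z hz => ?_
  obtain ⟨M, hn, t, rfl⟩ := exists_eq_arm_of_label_eq hz
  refine ⟨range (arm n hn l ε), range_subset_iff.2 fun _ => rfl, ⟨0, ?_⟩, mem_range_self t,
    isPreconnected_range (continuous_arm hn)⟩
  exact ext (zero_smul ℝ _) rfl

theorem not_isStep_label (hz : z ∈ trivialComponents (HedgehogSpace L)) :
    ¬ IsStep (label z) := by
  rintro ⟨n, l, ε, h⟩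
  have hsubsingleton : {w : HedgehogSpace L | label w = step n l ε}.Subsingleton := by
    have hcomp : connectedComponent (center n l ε) = {z} := by
      rw [← hz]
      refine connectedComponent_eq ?_
      rwa [connectedComponent_center]
    rw [← connectedComponent_center, hcomp]
    exact subsingleton_singleton
  let M : ArmIndex := (univ : Set ℤ)
  have hends : arm (M := M) n (mem_univ (n : ℤ)) l ε 1 = center n l ε := hsubsingleton rfl rfl
  exact spine_ne_zero M ((one_smul ℝ (spine M)).symm.trans (congr_arg vec hends))

theorem mem_trivialComponents_iff (hz : vec z = 0) :
    z ∈ trivialComponents (HedgehogSpace L) ↔ ¬ IsStep (label z) := by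
  refine ⟨not_isStep_label, fun hstep => ?_⟩
  refine Subset.antisymm (fun w hw => ?_) (singleton_subset_iff.2 mem_connectedComponent)
  have hlabel := label_eq_of_mem_connectedComponent hw
  refine ext (.trans ?_ hz.symm) hlabel
  by_contra hvec
  obtain ⟨M, hM⟩ := DFunLike.ne_iff.1 hvec
  obtain ⟨l, rfl⟩ := exists_eq_tip_of_vec_apply_ne_zero hM (hlabel ▸ hstep)
  exact label_ne_const_peak hz l hlabel.symm

theorem eventually_notMem_trivialComponents (hz : vec z ≠ 0) :
    ∀ᶠ w in 𝓝[≠] z, w ∉ trivialComponents (HedgehogSpace L) := by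
  obtain ⟨M, hM⟩ := DFunLike.ne_iff.1 hz
  obtain ⟨l, hl⟩ : ∃ l, label z 0 = peak l := by
    by_cases hstep : IsStep (label z)
    · obtain ⟨n, l, ε, h⟩ := hstep
      exact ⟨l, h ▸ step_apply_zero n l ε⟩
    · obtain ⟨l, rfl⟩ := exists_eq_tip_of_vec_apply_ne_zero hM hstep
      exact ⟨l, rfl⟩
  have htip : ∀ᶠ w in 𝓝[≠] z, w ≠ tip M l := by
    by_cases h : z = tip M l
    · exact h ▸ self_mem_nhdsWithin
    · exact eventually_ne_nhdsWithin h
  have hvec : Continuous fun w : HedgehogSpace L => vec w M := by fun_prop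
  filter_upwards [htip, nhdsWithin_le_nhds (hvec.continuousAt.eventually_ne hM),
    nhdsWithin_le_nhds ((isClopen_setOf_label_eq 0 (peak l)).isOpen.mem_nhds hl)]
    with w hw hwM hwl htriv
  obtain ⟨l', rfl⟩ := exists_eq_tip_of_vec_apply_ne_zero hwM (not_isStep_label htriv)
  exact hw (congr_arg (tip M) (peak_injective hwl))

theorem componentsTendTo_tip_iff {ι : Type*} {F : Filter ι} {π : ι → ℕ} (hπ : Tendsto π F atTop) :
    ComponentsTendTo F (fun i => center (π i) l ε) (tip M l) ↔ ∀ᶠ i in F, (π i : ℤ) ∈ M := by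
  simp only [ComponentsTendTo, connectedComponent_center]
  constructor
  · intro h
    have hcont : Continuous fun w : HedgehogSpace L => vec w M := by fun_prop
    have hM : vec (tip M l) M ≠ 0 := (spine_self M).trans_ne one_ne_zero
    filter_upwards [h _ (hcont.continuousAt.eventually_ne hM)] with i ⟨w, hw, hwM⟩
    obtain ⟨N, hN, t, rfl⟩ := exists_eq_arm_of_label_eq hw
    obtain rfl := eq_of_smul_spine_apply_ne_zero hwM
    exact hN
  · intro h U hU
    obtain ⟨V, hV, hVU⟩ := mem_nhds_subtype _ _ _ |>.1 hU
    have hlim : Tendsto (fun i => (spine M, step (π i) l ε)) F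
        (𝓝 (spine M, const ℕ (peak l))) :=
      tendsto_const_nhds.prodMk_nhds (tendsto_step.comp hπ)
    filter_upwards [h, hlim hV] with i hi hiV
    refine ⟨arm (π i) hi l ε 1, rfl, hVU ?_⟩
    change ((1 : ℝ) • spine M, step (π i) l ε) ∈ V
    rwa [one_smul]

variable {A : Type*} [TopologicalSpace A] {f g : A → HedgehogSpace L} {a : ℕ → A} {π : ℕ → ℕ}

/-- The points `a n` of `A` sit at all centers belonging to `l` and `ε` from the point of view of
`f`, while `g` permutes these centers by `π`. -/
structure IsCenterMatching (f g : A → HedgehogSpace L) (l : L) (ε : Bool) (a : ℕ → A)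
    (π : ℕ → ℕ) : Prop where
  left_apply : ∀ n, f (a n) = center n l ε
  right_apply : ∀ n, g (a n) = center (π n) l ε
  injective : Injective π

namespace IsCenterMatching

theorem componentsTendTo_right_iff (h : IsCenterMatching f g l ε a π) (hf : IsClopenEmbedding f)
    (hg : IsClopenEmbedding g) {b : A} (hb : f b = tip M l) {F : Filter ℕ} (hF : F ≤ atTop) :
    ComponentsTendTo F (fun n => center (π n) l ε) (g b) ↔ ∀ᶠ n : ℕ in F, (n : ℤ) ∈ M := by
  have hfa : f ∘ a = fun n => center n l ε := funext h.left_apply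
  have hga : g ∘ a = fun n => center (π n) l ε := funext h.right_apply
  rw [← hga, hg.componentsTendTo_comp_iff, ← hf.componentsTendTo_comp_iff, hfa, hb]
  exact componentsTendTo_tip_iff (π := id) hF

theorem exists_right_eq_tip (h : IsCenterMatching f g l ε a π) (hf : IsClopenEmbedding f)
    (hg : IsClopenEmbedding g) {b : A} (hb : f b = tip M l)
    (hM : ∃ᶠ n : ℕ in atTop, (n : ℤ) ∈ M) : ∃ M', g b = tip M' l := by
  have : NeBot (atTop ⊓ 𝓟 {n : ℕ | (n : ℤ) ∈ M}) := frequently_mem_iff_neBot.1 hM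
  have happroach := (h.componentsTendTo_right_iff hf hg hb inf_le_left).2
    (mem_inf_of_right (mem_principal_self {n : ℕ | (n : ℤ) ∈ M}))
  refine exists_eq_tip_of_label_eq (tendsto_nhds_unique
    (happroach.tendsto_comp continuous_label) ?_)
  exact tendsto_step.comp (h.injective.nat_tendsto_atTop.mono_left inf_le_left)

theorem eventually_mem_iff_mem (h : IsCenterMatching f g l ε a π) (hf : IsClopenEmbedding f)
    (hg : IsClopenEmbedding g) {b : A} {M' : ArmIndex} (hfb : f b = tip M l)
    (hgb : g b = tip M' l) : ∀ᶠ n : ℕ in atTop, (n : ℤ) ∈ M ↔ (π n : ℤ) ∈ M' := by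
  have hiff {F : Filter ℕ} (hF : F ≤ atTop) :
      (∀ᶠ n : ℕ in F, (n : ℤ) ∈ M) ↔ ∀ᶠ n in F, (π n : ℤ) ∈ M' := by
    rw [← h.componentsTendTo_right_iff hf hg hfb hF, hgb]
    exact componentsTendTo_tip_iff (h.injective.nat_tendsto_atTop.mono_left hF)
  have hmp := (hiff inf_le_left).1 (mem_inf_of_right (mem_principal_self {n : ℕ | (n : ℤ) ∈ M}))
  have hmpr := (hiff inf_le_left).2
    (mem_inf_of_right (mem_principal_self {n : ℕ | (π n : ℤ) ∈ M'}))
  filter_upwards [eventually_inf_principal.1 hmp, eventually_inf_principal.1 hmpr]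
    with n hn hn' using ⟨hn, hn'⟩

end IsCenterMatching

theorem isPoint_prolong {z : (ArmIndex →ᵇ ℝ) × (ℕ → Level L)} (h : IsPoint z) :
    IsPoint (prolong z) := by
  cases h with
  | skeleton x hanti hpeak =>
    refine .skeleton _ (fun i j hij => hanti (Nat.sub_le_sub_right hij 1)) fun l h => hpeak l ?_
    exact funext fun j => congr_fun h (j + 1)
  | arm M n hn l ε t =>
    rw [prolong, permute_smul, permute_spine, step_comp_pred]
    exact .arm _ (n + 1) (ArmIndex.mem_shift_iff.2 hn) l ε t
  | tip M l =>
    rw [prolong, permute_spine]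
    exact .tip _ l

theorem isPoint_shorten {z : (ArmIndex →ᵇ ℝ) × (ℕ → Level L)} (h : IsPoint z)
    (h₀₁ : z.2 0 = z.2 1) : IsPoint (shorten z) := by
  cases h with
  | skeleton x hanti hpeak =>
    refine .skeleton _ (fun i j hij => hanti (Nat.succ_le_succ hij)) fun l h => hpeak l ?_
    funext j
    cases j with
    | zero => exact h₀₁.trans (congr_fun h 0)
    | succ j => exact congr_fun h j
  | arm M n hn l ε t =>
    obtain ⟨m, rfl⟩ : ∃ m, n = m + 1 :=
      Nat.exists_eq_add_of_le' (step_apply_eq_peak_iff.1 (h₀₁.symm.trans (step_apply_zero n l ε)))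
    rw [shorten, permute_smul, permute_spine, step_comp_succ]
    exact .arm _ m (ArmIndex.mem_symm_shift_iff.2 hn) l ε t
  | tip M l =>
    rw [shorten, permute_spine]
    exact .tip _ l

/-- The self-embedding of the space onto the points whose label does not drop at once. -/
noncomputable def shift (z : HedgehogSpace L) : HedgehogSpace L :=
  ⟨prolong z.1, isPoint_prolong z.2⟩

theorem range_shift : range (shift (L := L)) = {z | label z 0 = label z 1} := by
  refine Subset.antisymm (range_subset_iff.2 fun z => rfl) fun z hz => ?_
  refine ⟨⟨shorten z.1, isPoint_shorten z.2 hz⟩, ext (permute_symm_permute _ _) (funext ?_)⟩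
  rintro (_ | j)
  exacts [hz.symm, rfl]

theorem isClopenEmbedding_shift : IsClopenEmbedding (shift (L := L)) := by
  refine ⟨.of_comp ?_ continuous_subtype_val (isEmbedding_prolong.comp .subtypeVal), ?_⟩
  · exact (isEmbedding_prolong.continuous.comp continuous_subtype_val).subtype_mk _
  · rw [range_shift]
    exact (isClopen_discrete {p : Level L × Level L | p.1 = p.2}).preimage
      (f := fun z : HedgehogSpace L => (label z 0, label z 1)) (by fun_prop)

section Rank

variable [WellFoundedLT L]

open Classical in
/-- The eventual value of the label at points with position `0`, and `⊥` elsewhere. -/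
noncomputable def rank (z : HedgehogSpace L) : Level L :=
  if vec z = 0 then label z (argmin (label z)) else ⊥

theorem rank_of_vec_ne_zero (h : vec z ≠ 0) : rank z = ⊥ := if_neg h

theorem rank_le_label (z : HedgehogSpace L) (k : ℕ) : rank z ≤ label z k := by
  rw [rank]
  split_ifs
  exacts [argmin_le _ k, bot_le]

theorem label_eq_rank_of_le {j k : ℕ} (hk : label z k = rank z) (hj : k ≤ j) :
    label z j = rank z :=
  (antitone_label z hj).trans_eq hk |>.antisymm (rank_le_label z j)

theorem exists_label_eq_rank (hz : vec z = 0) : ∃ k, label z k = rank z :=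
  ⟨argmin (label z), (if_pos hz).symm⟩

theorem rank_eq_of_forall_ge (hz : vec z = 0) {k : ℕ} {r : Level L}
    (h : ∀ j, k ≤ j → label z j = r) : rank z = r := by
  obtain ⟨i, hi⟩ := exists_label_eq_rank hz
  rw [← label_eq_rank_of_le hi (le_max_left i k), h _ (le_max_right i k)]

theorem rank_center (n : ℕ) (l : L) (ε : Bool) : rank (center n l ε) = foot l ε :=
  rank_eq_of_forall_ge (k := n + 1) rfl fun _ hj => step_apply_of_lt hj

theorem rank_lt_rank (hz : vec z = 0) (hw : w ∈ trivialComponents (HedgehogSpace L)) (hne : w ≠ z)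
    {k : ℕ} (hk : label z k = rank z) (hagree : ∀ j ≤ k, label w j = label z j) :
    rank w < rank z := by
  have hwk : label w k = rank z := (hagree k le_rfl).trans hk
  refine ((rank_le_label w k).trans_eq hwk).lt_of_ne fun hrank => ?_
  by_cases hw0 : vec w = 0
  · refine hne (ext (hw0.trans hz.symm) (funext fun j => ?_))
    rcases le_total j k with hj | hj
    · exact hagree j hj
    · rw [label_eq_rank_of_le hk hj, label_eq_rank_of_le (hwk.trans hrank.symm) hj, hrank]
  · obtain ⟨M, hM⟩ := DFunLike.ne_iff.1 hw0
    obtain ⟨l, rfl⟩ := exists_eq_tip_of_vec_apply_ne_zero hM (not_isStep_label hw)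
    exact peak_ne_bot (hwk.trans (hrank.symm.trans (rank_of_vec_ne_zero hw0)))

theorem eventually_rank_lt (z : HedgehogSpace L) :
    ∀ᶠ w in 𝓝[≠] z, w ∈ trivialComponents (HedgehogSpace L) → rank w < rank z := by
  by_cases hz : vec z = 0
  · obtain ⟨k, hk⟩ := exists_label_eq_rank hz
    have hagree : ∀ᶠ w in 𝓝 z, ∀ j ∈ Iic k, label w j = label z j :=
      (eventually_all_finite (finite_Iic k)).2 fun j _ =>
        (isClopen_setOf_label_eq j (label z j)).isOpen.mem_nhds rfl
    filter_upwards [nhdsWithin_le_nhds hagree, self_mem_nhdsWithin] with w hw hne htriv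
    exact rank_lt_rank hz htriv hne hk hw
  · exact (eventually_notMem_trivialComponents hz).mono fun w hw htriv => absurd htriv hw

theorem frequently_rank_eq (z : HedgehogSpace L) {r : Level L} (hr : r < rank z) :
    ∃ᶠ w in 𝓝 z, w ∈ trivialComponents (HedgehogSpace L) ∧ rank w = r := by
  have hz : vec z = 0 := by
    by_contra hz
    exact not_lt_bot (hr.trans_eq (rank_of_vec_ne_zero hz))
  have hlt (j : ℕ) : r < label z j := hr.trans_le (rank_le_label z j)
  let w (k : ℕ) : HedgehogSpace L := ⟨(0, cutoff (label z) k r),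
    .skeleton _ (antitone_cutoff (antitone_label z) fun j => (hlt j).le)
      fun l => cutoff_ne_const (hlt 0).ne' (peak l)⟩
  have hw : Tendsto w atTop (𝓝 z) := by
    have hzval : z.1 = (0, label z) := Prod.ext hz rfl
    refine tendsto_subtype_rng.2 ?_
    rw [hzval]
    exact tendsto_const_nhds.prodMk_nhds tendsto_cutoff
  refine hw.frequently (Eventually.frequently ?_)
  filter_upwards [eventually_not_isStep_cutoff (label_ne_const_peak hz) fun j => (hlt j).ne']
    with k hk
  exact ⟨(mem_trivialComponents_iff rfl).2 hk,
    rank_eq_of_forall_ge (k := k + 1) rfl fun _ hj => cutoff_apply_of_lt hj⟩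

theorem isCantorBendixsonRank_rank :
    IsCantorBendixsonRank (trivialComponents (HedgehogSpace L)) rank :=
  ⟨eventually_rank_lt, fun z _ => frequently_rank_eq z⟩

theorem exists_apply_eq_center {A : Type*} [TopologicalSpace A] {f g : A → HedgehogSpace L}
    (hf : IsClopenEmbedding f) (hg : IsClopenEmbedding g) {a : A} (ha : f a = center n l ε) :
    ∃ m, g a = center m l ε := by
  have hrank : rank (g a) = foot l ε := by
    rw [← rank_center n, ← ha]
    exact congr_fun (isCantorBendixsonRank_rank.comp_eq_comp hg hf) a
  have hvec : vec (g a) = 0 := by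
    by_contra h
    exact foot_ne_bot (hrank.symm.trans (rank_of_vec_ne_zero h))
  have hstep : IsStep (label (g a)) := by
    by_contra h
    rw [← mem_trivialComponents_iff hvec, ← mem_preimage, hg.preimage_trivialComponents,
      ← hf.preimage_trivialComponents, mem_preimage, ha] at h
    exact not_isStep_label h ⟨n, l, ε, rfl⟩
  obtain ⟨m, l', ε', h⟩ := hstep
  have hcenter := ext (w := center m l' ε') hvec h
  obtain ⟨rfl, rfl⟩ := foot_inj.1 <| hrank.symm.trans (hcenter ▸ rank_center m l' ε')
  exact ⟨m, hcenter⟩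

theorem IsCenterMatching.center_mem_range_iff (h : IsCenterMatching f g l ε a π)
    (hf : IsClopenEmbedding f) (hg : IsClopenEmbedding g) :
    center m l ε ∈ range g ↔ m ∈ range π := by
  constructor
  · rintro ⟨b, hb⟩
    obtain ⟨n, hn⟩ := exists_apply_eq_center hg hf hb
    obtain rfl : a n = b := hf.injective ((h.left_apply n).trans hn.symm)
    exact ⟨n, (center_inj.1 <| (h.right_apply n).symm.trans hb).1⟩
  · rintro ⟨n, rfl⟩
    exact ⟨a n, h.right_apply n⟩

theorem exists_isCenterMatching (hf : IsClopenEmbedding f) (hg : IsClopenEmbedding g)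
    (hcenter : ∀ n, center n l ε ∈ range f) : ∃ a π, IsCenterMatching f g l ε a π := by
  choose a ha using hcenter
  choose π hπ using fun n => exists_apply_eq_center hf hg (ha n)
  refine ⟨a, π, ha, hπ, fun m n hmn => ?_⟩
  have hag : a m = a n := hg.injective <| by rw [hπ, hπ, hmn]
  exact (center_inj.1 <| (ha m).symm.trans <| hag ▸ ha n).1

theorem center_false_mem_range (hf : IsClopenEmbedding f) (hg : IsClopenEmbedding g)
    (hblock : {z | label z 0 = peak l} ⊆ range f) (htrue : ∀ n, center n l true ∈ range g)
    (n : ℕ) : center n l false ∈ range g := by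
  have hcenter (ε : Bool) (n : ℕ) : center n l ε ∈ range f := hblock (step_apply_zero n l ε)
  obtain ⟨a, π, hπ⟩ := exists_isCenterMatching hf hg (hcenter true)
  obtain ⟨b, τ, hτ⟩ := exists_isCenterMatching hf hg (hcenter false)
  let e : ℕ ≃ ℕ := .ofBijective π
    ⟨hπ.injective, fun m => (hπ.center_mem_range_iff hf hg).1 (htrue m)⟩
  have hinj : Injective (e.symm ∘ τ) := e.symm.injective.comp hτ.injective
  have hsurj : Surjective (e.symm ∘ τ) := surjective_of_almost_invariant hinj fun S hS => by
    let M : ArmIndex := ((↑) '' S : Set ℤ)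
    have hM (n : ℕ) : (n : ℤ) ∈ M ↔ n ∈ S := Nat.cast_injective.mem_set_image
    have hfreq : ∃ᶠ n : ℕ in atTop, (n : ℤ) ∈ M := by
      simp only [hM]
      exact Nat.frequently_atTop_iff_infinite.2 hS
    obtain ⟨c, hc⟩ := hblock (show tip M l ∈ _ from rfl)
    obtain ⟨M', hM'⟩ := hπ.exists_right_eq_tip hf hg hc hfreq
    rw [Nat.cofinite_eq_atTop]
    filter_upwards [hτ.eventually_mem_iff_mem hf hg hc hM',
      hinj.nat_tendsto_atTop.eventually (hπ.eventually_mem_iff_mem hf hg hc hM')] with n hn hn'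
    have hπτ : π ((e.symm ∘ τ) n) = τ n := e.apply_symm_apply (τ n)
    rw [hπτ, ← hn, hM, hM] at hn'
    exact hn'.2
  exact (hτ.center_mem_range_iff hf hg).2 ((e.symm.comp_surjective τ).1 hsurj n)

end Rank

section Representation

variable {Q : Type*} [Preorder Q] (ι : Q ↪ L)

/-- The subspace representing `q`: the points whose first label is `peak (ι p)` for some `p ≤ q`,
where for `p = q` all of them are taken, whereas for `p ≠ q` the hedgehogs with index `0` belonging
to `false` are left out. -/
def lowerPart (q : Q) : Set (HedgehogSpace L) :=
  {z | ∃ p ≤ q, label z 0 = peak (ι p) ∧ (label z 1 = foot (ι p) false → p = q)}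

variable {ι} {q q' : Q}

theorem isClopen_lowerPart (q : Q) : IsClopen (lowerPart ι q) :=
  (isClopen_discrete {r : Level L × Level L | ∃ p ≤ q, r.1 = peak (ι p) ∧
    (r.2 = foot (ι p) false → p = q)}).preimage
    (f := fun z : HedgehogSpace L => (label z 0, label z 1)) (by fun_prop)

theorem setOf_label_zero_eq_subset_lowerPart : {z | label z 0 = peak (ι q)} ⊆ lowerPart ι q :=
  fun _ hz => ⟨q, le_rfl, hz, fun _ => rfl⟩

theorem center_mem_lowerPart_iff :
    center n (ι q) ε ∈ lowerPart ι q' ↔ q ≤ q' ∧ (n = 0 → ε = false → q = q') := by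
  have hlabel : label (center n (ι q) ε) 1 = foot (ι q) false ↔ n = 0 ∧ ε = false := by
    change step n (ι q) ε 1 = foot (ι q) false ↔ _
    rcases n.eq_zero_or_pos with rfl | hn
    · rw [step_apply_of_lt one_pos, foot_inj]
      tauto
    · rw [step_apply_of_le hn]
      exact iff_of_false foot_ne_peak.symm fun h => hn.ne' h.1
  constructor
  · rintro ⟨p, hp, h₀, h₁⟩
    obtain rfl : q = p := ι.injective (peak_injective ((step_apply_zero n (ι q) ε).symm.trans h₀))
    exact ⟨hp, fun hn hε => h₁ (hlabel.2 ⟨hn, hε⟩)⟩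
  · rintro ⟨hp, h⟩
    exact ⟨q, hp, step_apply_zero n (ι q) ε, fun h₁ => h (hlabel.1 h₁).1 (hlabel.1 h₁).2⟩

theorem mapsTo_shift_lowerPart (h : q ≤ q') : MapsTo shift (lowerPart ι q) (lowerPart ι q') := by
  rintro z ⟨p, hp, h₀, -⟩
  exact ⟨p, hp.trans h, h₀, fun h₁ => absurd (h₁.symm.trans h₀) foot_ne_peak⟩

variable [WellFoundedLT L]

theorem le_of_isClopenEmbedding {g : lowerPart ι q → lowerPart ι q'} (hg : IsClopenEmbedding g) :
    q ≤ q' := by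
  let a : lowerPart ι q := ⟨center 0 (ι q) true, center_mem_lowerPart_iff.2 (by simp)⟩
  obtain ⟨m, hm⟩ := exists_apply_eq_center (a := a) (.subtypeVal (isClopen_lowerPart q))
    ((IsClopenEmbedding.subtypeVal (isClopen_lowerPart q')).comp hg) rfl
  have hmem : center m (ι q) true ∈ lowerPart ι q' := hm.subst (g a).2
  exact (center_mem_lowerPart_iff.1 hmem).1

theorem le_iff_homeoToClopenSubset :
    q ≤ q' ↔ HomeoToClopenSubset (lowerPart ι q) (lowerPart ι q') := by
  rw [homeoToClopenSubset_iff_exists_isClopenEmbedding]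
  constructor
  · intro h
    exact ⟨_, isClopenEmbedding_shift.mapsToRestrict (isClopen_lowerPart q)
      (mapsTo_shift_lowerPart h)⟩
  · rintro ⟨g, hg⟩
    exact le_of_isClopenEmbedding hg

theorem isEmpty_homeomorph_lowerPart (hne : q ≠ q') :
    IsEmpty (lowerPart ι q ≃ₜ lowerPart ι q') := by
  refine ⟨fun e => ?_⟩
  have he : IsClopenEmbedding e := .of_homeomorph e
  have hle : q ≤ q' := le_of_isClopenEmbedding he
  have hrange : range ((↑) ∘ e : lowerPart ι q → HedgehogSpace L) = lowerPart ι q' := by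
    rw [range_comp, e.range_coe, image_univ, Subtype.range_coe]
  have hfalse : center 0 (ι q) false ∈ range ((↑) ∘ e : lowerPart ι q → HedgehogSpace L) := by
    refine center_false_mem_range (.subtypeVal (isClopen_lowerPart q))
      ((IsClopenEmbedding.subtypeVal (isClopen_lowerPart q')).comp he) ?_ (fun n => ?_) 0
    · rw [Subtype.range_coe]
      exact setOf_label_zero_eq_subset_lowerPart
    · rw [hrange, center_mem_lowerPart_iff]
      exact ⟨hle, by simp⟩
  rw [hrange, center_mem_lowerPart_iff] at hfalse
  exact hne (hfalse.2 rfl rfl)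

end Representation

theorem exists_vec_eq_smul_spine (z : HedgehogSpace L) :
    ∃ (t : ℝ) (M : ArmIndex), vec z = t • spine M := by
  obtain ⟨_, h⟩ := z
  cases h with
  | skeleton => exact ⟨0, (∅ : Set ℤ), (zero_smul ℝ _).symm⟩
  | arm M _ _ _ _ t => exact ⟨t, M, rfl⟩
  | tip M => exact ⟨1, M, (one_smul ℝ _).symm⟩

theorem mk_hedgehogSpace [WellFoundedLT L] (hL : 𝔠 ≤ #L) : #(HedgehogSpace L) = #L := by
  have hL₀ : ℵ₀ ≤ #L := aleph0_le_continuum.trans hL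
  have : Infinite L := infinite_iff.2 hL₀
  have : Infinite (Level L) := .of_injective _ peak_injective
  apply le_antisymm
  · choose t M h using exists_vec_eq_smul_spine (L := L)
    let code (z : HedgehogSpace L) : (ℝ × ArmIndex) × {x : ℕ → Level L | Antitone x} :=
      ((t z, M z), ⟨label z, antitone_label z⟩)
    have hcode : Injective code := fun z w hzw => by
      simp only [code, Prod.mk.injEq, Subtype.mk.injEq] at hzw
      exact ext (by rw [h, h, hzw.1.1, hzw.1.2]) hzw.2
    have hArm : #(ℝ × ArmIndex) = 𝔠 := by
      rw [mk_prod, mk_real, show #ArmIndex = #(Set ℤ) from rfl, mk_set, mk_int, two_power_aleph0,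
        lift_continuum, mul_eq_self aleph0_le_continuum]
    refine (mk_le_of_injective hcode).trans ?_
    rw [mk_prod, hArm, lift_continuum, lift_uzero]
    exact mul_le_of_le hL₀ hL (mk_setOf_antitone_le.trans mk_level_le)
  · exact mk_le_of_injective (f := fun l => center 0 l true) fun _ _ h => (center_inj.1 h).2.1

end HedgehogSpace

end Space

end

theorem statement3 (α : Cardinal.{u}) (hα : Cardinal.continuum ≤ α) :
    ∃ (X : Type u) (tX : TopologicalSpace X),
      @TopologicalSpace.MetrizableSpace X tX ∧ #X = α ∧
      @RepresentsByClopenEmb α X tX := by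
  classical
  induction α using Cardinal.inductionOn with | mk L
  let : LinearOrder L := linearOrderOfSTO (WellOrderingRel (α := L))
  have : WellFoundedLT L := ⟨WellOrderingRel.isWellOrder.wf⟩
  refine ⟨HedgehogSpace L, inferInstance, inferInstance, HedgehogSpace.mk_hedgehogSpace hα,
    fun Q le hQ hrefl htrans => ?_⟩
  obtain ⟨ι⟩ : Nonempty (Q ↪ L) := hQ
  let : Preorder Q := { le := le, le_refl := hrefl, le_trans := htrans }
  exact ⟨HedgehogSpace.lowerPart ι, HedgehogSpace.isClopen_lowerPart,
    fun _ _ => HedgehogSpace.isEmpty_homeomorph_lowerPart,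
    fun _ _ => HedgehogSpace.le_iff_homeoToClopenSubset (ι := ι)⟩
end

section
/- For every cardinal number α ≥ 𝔠, there exists a metrizable topological space X with |X| = α such that every quasiordered set (Q, ≤) with |Q| ≤ α has a representation by clopen subspaces of X with respect to embeddability onto closed subspaces; that is, there is a family {X(q) : q ∈ Q} of pairwise non-homeomorphic clopen subsets of X such that q ≤ q' if and only if X(q) is homeomorphic to a closed subset of X(q'), and moreover ¬(q ≤ q') implies that there exists no injective continuous map from X(q) into X(q'). -/
universe u

open Cardinal

/-- `A` is homeomorphic to a closed subset of `B`. -/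
def HomeoToClosedSubset (A : Type*) [TopologicalSpace A]
    (B : Type*) [TopologicalSpace B] : Prop :=
  ∃ t : Set B, IsClosed t ∧ Nonempty (A ≃ₜ t)

/-- There exists an injective continuous map from `A` into `B`. -/
def ExistsInjCont (A : Type*) [TopologicalSpace A]
    (B : Type*) [TopologicalSpace B] : Prop :=
  ∃ f : A → B, Continuous f ∧ Function.Injective f

/-- The representation property of the space `X` for a quasiorder, with respect to
embeddability onto closed subspaces. -/
def RepresentsByClosedEmb (α : Cardinal.{u}) (X : Type u) [TopologicalSpace X] : Prop :=
  ∀ (Q : Type u) (le : Q → Q → Prop), #Q ≤ α →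
    (∀ q, le q q) → (∀ a b c, le a b → le b c → le a c) →
    ∃ Xq : Q → Set X,
      (∀ q, IsClopen (Xq q)) ∧
      (∀ q q', q ≠ q' → IsEmpty ((Xq q) ≃ₜ (Xq q'))) ∧
      (∀ q q', le q q' ↔ HomeoToClosedSubset (Xq q) (Xq q')) ∧
      (∀ q q', ¬ le q q' → ¬ ExistsInjCont (Xq q) (Xq q'))

/-!
A Bernstein-type recursion yields a dense subset `A` of the plane such that every continuous
injection of an open subspace of `A` into `A` is the inclusion. Given countably many equivalence
relations `r i` on a set `E` and a discrete set of points `p i` of `A`, glue copies of `A` indexed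
by `E`, identifying the points over `p i` of the copies related by `r i`. Since `A` stays connected
when the points `p i` are removed, every continuous injection between two such metrizable spaces
maps each copy identically onto a copy, so it comes from an embedding of the relational structure
`(E, r)`; conversely, these embeddings induce closed embeddings. This reduces the theorem to
relational structures.

Countably many relations on the disjoint union of a square `O × O` and a set of `n` points suffice
to encode a well-order with a ladder system, a point `i` of it, and the number `n`. Such a cell
embeds into the cell with parameters `j` and `m` if and only if `i = j` and `n ≤ m`. The element `q`
of a quasiorder is represented by the cells `(a, n)` with `a ≤ q`, except for those with `n = 0` and
`a ≠ q`. If `q ≤ q'`, then `n ↦ n + 1` gives an embedding, and the cell `(q, 0)` tells `q` from all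
other elements, even from equivalent ones.
-/

namespace ClopenRepresentation

open Set Topology Function

section TransfiniteSelection

variable {X ι : Type u} {κ : Cardinal.{u}}

/-- A relation is `κ`-large if no set of fewer than `κ` points meets all of its off-diagonal
pairs. Such relations can be met by transfinite recursions of length `κ`. -/
def IsLarge (κ : Cardinal.{u}) (R : Set (X × X)) : Prop :=
  ∀ s : Set X, #s < κ → ∃ a b, (a, b) ∈ R ∧ a ∉ s ∧ b ∉ s ∧ a ≠ b

lemma isLarge_prod_self (hκ : ℵ₀ ≤ κ) {F : Set X} (hF : κ ≤ #F) : IsLarge κ (F ×ˢ F) := by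
  intro s hs
  obtain ⟨a, haF, has⟩ := sdiff_nonempty_of_mk_lt_mk (hs.trans_le hF)
  have insert_lt : #(insert a s : Set X) < κ :=
    mk_insert_le.trans_lt (add_lt_of_lt hκ hs (one_lt_aleph0.trans_le hκ))
  obtain ⟨b, hbF, hbs⟩ := sdiff_nonempty_of_mk_lt_mk (insert_lt.trans_le hF)
  rw [mem_insert_iff, not_or] at hbs
  exact ⟨a, b, ⟨haF, hbF⟩, has, hbs.2, Ne.symm hbs.1⟩

lemma isLarge_of_injective (hκ : ℵ₀ ≤ κ) {T : Set X} (hT : κ ≤ #T) {f : T → X}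
    (hf : Injective f) (hne : ∀ x, f x ≠ x) {R : Set (X × X)} (hR : ∀ x : T, (↑x, f x) ∈ R) :
    IsLarge κ R := by
  intro s hs
  have bad_lt : #((↑) ⁻¹' s ∪ f ⁻¹' s : Set T) < κ :=
    (mk_union_le _ _).trans_lt <| add_lt_of_lt hκ
      ((mk_preimage_of_injective _ _ Subtype.val_injective).trans_lt hs)
      ((mk_preimage_of_injective _ _ hf).trans_lt hs)
  obtain ⟨x, -, hx⟩ := sdiff_nonempty_of_mk_lt_mk (bad_lt.trans_le (hT.trans mk_univ.ge))
  rw [mem_union, not_or] at hx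
  exact ⟨x, f x, hR x, hx.1, hx.2, (hne x).symm⟩

lemma exists_forall_of_forall_exists_prior {ι β : Type*} [LT ι] [WellFoundedLT ι]
    {P : (i : ι) → (∀ j < i, β) → β → Prop} (hP : ∀ i c, ∃ x, P i c x) :
    ∃ f : ι → β, ∀ i, P i (fun j _ => f j) (f i) := by
  choose next hnext using hP
  refine ⟨wellFounded_lt.fix next, fun i => ?_⟩
  rw [wellFounded_lt.fix_eq]
  exact hnext _ _

theorem exists_injective_selection (hκ : ℵ₀ ≤ κ) (hι : #ι ≤ κ) {R : ι → Set (X × X)}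
    (hR : ∀ i, IsLarge κ (R i)) :
    ∃ a b : ι → X, Injective a ∧ (∀ i j, a i ≠ b j) ∧ ∀ i, (a i, b i) ∈ R i := by
  obtain ⟨_, _, hord⟩ := exists_ord_eq_type_lt ι
  let used (i : ι) (c : ∀ j < i, X × X) : Set X := ⋃ j : Iio i, {(c j j.2).1, (c j j.2).2}
  have used_lt (i : ι) (c : ∀ j < i, X × X) : #(used i c) < κ := by
    refine (mk_iUnion_le_sum_mk.trans (sum_le_sum _ (fun _ => 2) fun j => ?_)).trans_lt ?_
    · exact mk_insert_le.trans (by rw [mk_singleton, one_add_one_eq_two])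
    · rw [sum_const', mul_comm]
      exact mul_lt_of_lt hκ (ofNat_lt_aleph0.trans_le hκ) ((mk_Iio_lt i hord).trans_le hι)
  obtain ⟨c, hc⟩ := exists_forall_of_forall_exists_prior
    (P := fun i c p => p ∈ R i ∧ p.1 ∉ used i c ∧ p.2 ∉ used i c ∧ p.1 ≠ p.2)
    fun i c => Prod.exists.2 (hR i _ (used_lt i c))
  have fst_mem_used {i j : ι} (h : j < i) : (c j).1 ∈ used i fun j _ => c j :=
    mem_iUnion.2 ⟨⟨j, h⟩, .inl rfl⟩
  have snd_mem_used {i j : ι} (h : j < i) : (c j).2 ∈ used i fun j _ => c j :=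
    mem_iUnion.2 ⟨⟨j, h⟩, .inr rfl⟩
  have fst_ne_fst {i j : ι} (h : i < j) : (c i).1 ≠ (c j).1 := fun heq =>
    (hc j).2.1 (heq ▸ fst_mem_used h)
  refine ⟨fun i => (c i).1, fun i => (c i).2, fun i j h => ?_, fun i j => ?_, fun i => (hc i).1⟩
  · exact of_not_not fun hij => (Ne.lt_or_gt hij).elim (fst_ne_fst · h) (fst_ne_fst · h.symm)
  · change (c i).1 ≠ (c j).2
    rcases lt_trichotomy i j with hij | rfl | hij
    · exact fun heq => (hc j).2.2.1 (heq ▸ fst_mem_used hij)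
    · exact (hc i).2.2.2
    · exact fun heq => (hc i).2.1 (heq ▸ snd_mem_used hij)

theorem exists_disjoint_forall_le_mk (hκ : ℵ₀ ≤ κ) (hι : #ι ≤ κ) {R : ι → Set (X × X)}
    (hR : ∀ i, IsLarge κ (R i)) :
    ∃ A B : Set X, Disjoint A B ∧ ∀ i, κ ≤ #{a ∈ A | ∃ b ∈ B, (a, b) ∈ R i} := by
  induction κ using Cardinal.inductionOn with | mk K =>
  have mk_le : #(ι × K) ≤ #K := by
    rw [mk_prod, lift_id, lift_id]
    exact mul_le_of_le hκ hι le_rfl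
  obtain ⟨a, b, a_inj, a_ne_b, h⟩ :=
    exists_injective_selection hκ mk_le (R := fun t => R t.1) fun t => hR t.1
  refine ⟨range a, range b, disjoint_left.2 ?_, fun i => ?_⟩
  · rintro _ ⟨s, rfl⟩ ⟨t, hst⟩
    exact a_ne_b s t hst.symm
  · exact mk_le_of_injective
      (f := fun k => ⟨a (i, k), mem_range_self _, b (i, k), mem_range_self _, h (i, k)⟩)
      fun k l hkl => (Prod.ext_iff.1 (a_inj (congrArg Subtype.val hkl))).2

end TransfiniteSelection

section RigidSubspaces

/-- Every continuous injection of an open subspace of `A` into `A` is the inclusion. -/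
def LocallyRigid (A : Type*) [TopologicalSpace A] : Prop :=
  ∀ O : Set A, IsOpen O → ∀ f : O → A, Continuous f → Injective f → ∀ x : O, f x = x

lemma not_countable_of_continuum_le_mk {X : Type*} {s : Set X} (hs : 𝔠 ≤ #s) : ¬ s.Countable :=
  fun h => (aleph0_lt_continuum.trans_le hs).not_ge (le_aleph0_iff_set_countable.2 h)

variable {X : Type u} [TopologicalSpace X]

lemma continuum_le_mk_of_isClosed [PolishSpace X] {F : Set X} (hF : IsClosed F)
    (h : ¬ F.Countable) : 𝔠 ≤ #F := by
  obtain ⟨f, f_mem, -, f_inj⟩ := hF.exists_nat_bool_injection_of_not_countable h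
  have := (mk_range_eq_of_injective f_inj).ge.trans (lift_le.{0}.2 (mk_le_mk_of_subset f_mem))
  simpa using this

lemma mk_isClosed_le_continuum [SecondCountableTopology X] :
    #{F : Set X // IsClosed F} ≤ 𝔠 := by
  borelize X
  have basis_le : #(TopologicalSpace.countableBasis X) ≤ 𝔠 :=
    (le_aleph0_iff_set_countable.2 (TopologicalSpace.countable_countableBasis X)).trans
      aleph0_le_continuum
  have := MeasurableSpace.cardinal_measurableSet_le_continuum basis_le
  rw [← (TopologicalSpace.isBasis_countableBasis X).borel_eq_generateFrom,
    ← BorelSpace.measurable_eq (α := X)] at this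
  exact (mk_le_mk_of_subset fun F hF => IsClosed.measurableSet hF).trans this

lemma eq_of_mem_closure_graph {Z Y : Type*} [TopologicalSpace Z] [TopologicalSpace Y] [T2Space Y]
    {j : Z → X} (hj : IsInducing j) {f : Z → Y} (hf : Continuous f) {z : Z} {y : Y}
    (h : (j z, y) ∈ closure (range fun w => (j w, f w))) : y = f z := by
  have graph_closed : IsClosed {q : Z × Y | q.2 = f q.1} :=
    isClosed_eq continuous_snd (hf.comp continuous_fst)
  have mem_closure : (z, y) ∈ closure {q : Z × Y | q.2 = f q.1} := by
    rw [(hj.prodMap .id).closure_eq_preimage_closure_image]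
    refine closure_mono ?_ h
    rintro _ ⟨w, rfl⟩
    exact ⟨(w, f w), rfl, rfl⟩
  exact graph_closed.closure_eq.subset mem_closure

lemma isLarge_closure_graph_inter {κ : Cardinal.{u}} (hκ : ℵ₀ ≤ κ) {A : Set X} {O : Set A}
    {f : O → A} (hf : Injective f) {K : Set X} (hK : κ ≤ #(K ∩ A : Set X))
    (hne : ∀ x : A, ↑x ∈ K → ∃ h : x ∈ O, f ⟨x, h⟩ ≠ x) :
    IsLarge κ (closure (range fun z : O => ((z : X), (f z : X))) ∩ Prod.fst ⁻¹' K) := by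
  choose mem_O f_ne using fun x : (K ∩ A : Set X) => hne ⟨x, x.2.2⟩ x.2.1
  refine isLarge_of_injective hκ hK (f := fun x => f ⟨_, mem_O x⟩) ?_ ?_ ?_
  · exact fun x y hxy => Subtype.ext <|
      congrArg (fun z : O => (z : X)) (hf (Subtype.ext hxy))
  · exact fun x h => f_ne x (Subtype.ext h)
  · exact fun x => ⟨subset_closure ⟨⟨_, mem_O x⟩, rfl⟩, x.2.1⟩

theorem locallyRigid_of_meets_isLarge [T3Space X] {κ : Cardinal.{u}} (hκ : ℵ₀ ≤ κ) {A B : Set X}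
    (disj : Disjoint A B) (le_mk : ∀ x, ∀ K ∈ 𝓝 x, IsClosed K → κ ≤ #(K ∩ A : Set X))
    (meets : ∀ R : Set (X × X), IsClosed R → IsLarge κ R → ∃ a ∈ A, ∃ b ∈ B, (a, b) ∈ R) :
    LocallyRigid A := by
  intro O hO f f_cont f_inj x₀
  by_contra hx₀
  have moved_open : IsOpen ((↑) '' {x : O | f x ≠ x} : Set A) :=
    hO.isOpenMap_subtype_val _ (isOpen_ne_fun f_cont continuous_subtype_val)
  obtain ⟨V, hV, V_sub⟩ := mem_nhds_subtype _ _ _ |>.1 (moved_open.mem_nhds ⟨x₀, hx₀, rfl⟩)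
  obtain ⟨K, hK, K_closed, K_sub⟩ := exists_mem_nhds_isClosed_subset hV
  have K_moved (x : A) (hx : ↑x ∈ K) : ∃ h : x ∈ O, f ⟨x, h⟩ ≠ x := by
    obtain ⟨y, hy, rfl⟩ := V_sub (K_sub hx)
    exact ⟨y.2, hy⟩
  have large := isLarge_closure_graph_inter hκ f_inj (le_mk _ K hK K_closed) K_moved
  obtain ⟨a, haA, b, hbB, hab, haK⟩ :=
    meets _ (isClosed_closure.inter (K_closed.preimage continuous_fst)) large
  obtain ⟨haO, -⟩ := K_moved ⟨a, haA⟩ haK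
  have b_eq : b = f ⟨⟨a, haA⟩, haO⟩ :=
    eq_of_mem_closure_graph (j := fun z : O => (z : X)) (f := fun z => (f z : X))
      (IsInducing.subtypeVal.comp .subtypeVal) (continuous_subtype_val.comp f_cont)
      (z := ⟨⟨a, haA⟩, haO⟩) hab
  exact disjoint_left.1 disj (f ⟨⟨a, haA⟩, haO⟩).2 (b_eq ▸ hbB)

theorem exists_locallyRigid [PolishSpace X]
    (hX : ∀ U : Set X, IsOpen U → U.Nonempty → ¬ U.Countable) :
    ∃ A : Set X, LocallyRigid A ∧ ∀ F, IsClosed F → ¬ F.Countable → ¬ (F ∩ A).Countable := by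
  obtain ⟨A, B, disj, meets⟩ := exists_disjoint_forall_le_mk aleph0_le_continuum
    (R := ((↑) : {R : Set (X × X) // IsClosed R ∧ IsLarge 𝔠 R} → Set (X × X)))
    ((mk_le_mk_of_subset fun R hR => hR.1).trans mk_isClosed_le_continuum) fun R => R.2.2
  have le_mk_inter {F : Set X} (hF : IsClosed F) (h : ¬ F.Countable) : 𝔠 ≤ #(F ∩ A : Set X) := by
    have large := isLarge_prod_self aleph0_le_continuum (continuum_le_mk_of_isClosed hF h)
    refine (meets ⟨F ×ˢ F, hF.prod hF, large⟩).trans (mk_le_mk_of_subset ?_)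
    rintro a ⟨ha, b, -, hab⟩
    exact ⟨hab.1, ha⟩
  refine ⟨A, locallyRigid_of_meets_isLarge aleph0_le_continuum disj ?_ ?_, fun F hF h =>
    not_countable_of_continuum_le_mk (le_mk_inter hF h)⟩
  · intro x K hK K_closed
    exact le_mk_inter K_closed fun h => hX _ isOpen_interior
      ⟨x, mem_interior_iff_mem_nhds.2 hK⟩ (h.mono interior_subset)
  · intro R R_closed R_large
    obtain ⟨⟨a, ha, b, hb, hab⟩⟩ :=
      mk_ne_zero_iff.1 (continuum_pos.trans_le (meets ⟨R, R_closed, R_large⟩)).ne'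
    exact ⟨a, ha, b, hb, hab⟩

end RigidSubspaces

section RigidBase

variable {V : Type*} [NormedAddCommGroup V] [NormedSpace ℝ V]

lemma not_countable_of_isOpen [Nontrivial V] {U : Set V} (hU : IsOpen U) (hne : U.Nonempty) :
    ¬ U.Countable := fun h => by
  obtain ⟨x, hx, hx'⟩ := (h.dense_compl ℝ).inter_open_nonempty U hU hne
  exact hx' hx

lemma dense_of_meets_isClosed [Nontrivial V] {S : Set V}
    (hS : ∀ F, IsClosed F → ¬ F.Countable → (F ∩ S).Nonempty) : Dense S := by
  refine dense_iff_inter_open.2 fun U hU ⟨x, hx⟩ => ?_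
  obtain ⟨K, hK, K_closed, K_sub⟩ := exists_mem_nhds_isClosed_subset (hU.mem_nhds hx)
  refine (hS K K_closed fun h => ?_).mono (inter_subset_inter_left _ K_sub)
  exact not_countable_of_isOpen isOpen_interior ⟨x, mem_interior_iff_mem_nhds.2 hK⟩
    (h.mono interior_subset)

/-- A separation of `S` by open sets `U` and `W` would make `(U ∪ W)ᶜ` a closed set missing `S`,
hence countable; but a countable set does not disconnect `V`. -/
lemma isPreconnected_of_meets_isClosed (hV : 1 < Module.rank ℝ V) {S : Set V}
    (hS : ∀ F, IsClosed F → ¬ F.Countable → (F ∩ S).Nonempty) : IsPreconnected S := by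
  have : Nontrivial V := (rank_pos_iff_nontrivial (R := ℝ)).1 (zero_lt_one.trans hV)
  rintro U W hU hW S_sub ⟨x, -, hxU⟩ ⟨y, -, hyW⟩
  have compl_countable : (U ∪ W)ᶜ.Countable := of_not_not fun h => by
    obtain ⟨z, hz, hzS⟩ := hS _ (hU.union hW).isClosed_compl h
    exact hz (S_sub hzS)
  have union_conn := (compl_countable.isConnected_compl_of_one_lt_rank hV).isPreconnected
  rw [compl_compl] at union_conn
  obtain ⟨z, -, hz⟩ := union_conn U W hU hW subset_rfl ⟨x, .inl hxU, hxU⟩ ⟨y, .inr hyW, hyW⟩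
  exact (dense_of_meets_isClosed hS).inter_open_nonempty _ (hU.inter hW) ⟨z, hz⟩ |>.mono
    fun _ h => h.symm

/-- Distinct indices have points at distance at least `1`. -/
def IsOneSeparated {ι B : Type*} [MetricSpace B] (p : ι → B) : Prop :=
  Pairwise fun i j => 1 ≤ dist (p i) (p j)

/-- A metric base space over which copies are glued at the discrete points `p i`. -/
structure IsRigidBase {ι B : Type*} [MetricSpace B] (p : ι → B) : Prop where
  locallyRigid : LocallyRigid B
  isOneSeparated : IsOneSeparated p
  dense_compl : Dense (range p)ᶜ
  isPreconnected_compl : IsPreconnected (range p)ᶜ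
  nontrivial_compl : (range p)ᶜ.Nontrivial

lemma nonempty_of_not_countable {X : Type*} {s : Set X} (hs : ¬ s.Countable) : s.Nonempty :=
  nonempty_iff_ne_empty.2 fun h => hs (h ▸ countable_empty)

lemma isRigidBase_of_meets_isClosed {ι : Type*} [Countable ι] (hV : 1 < Module.rank ℝ V)
    {A : Set V} (hA : ∀ F, IsClosed F → ¬ F.Countable → ¬ (F ∩ A).Countable)
    (A_rigid : LocallyRigid A) {p : ι → A} (hp : IsOneSeparated p) :
    IsRigidBase p := by
  have : Nontrivial V := (rank_pos_iff_nontrivial (R := ℝ)).1 (zero_lt_one.trans hV)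
  have not_countable_inter {F : Set V} (hF : IsClosed F) (h : ¬ F.Countable) :
      ¬ (F ∩ (↑) '' (range p)ᶜ).Countable := by
    refine fun hc => hA F hF h ((hc.union ((countable_range p).image (↑))).mono ?_)
    intro x ⟨hxF, hxA⟩
    by_cases hx : (⟨x, hxA⟩ : A) ∈ range p
    · exact .inr ⟨_, hx, rfl⟩
    · exact .inl ⟨hxF, _, hx, rfl⟩
  have meets (F : Set V) (hF : IsClosed F) (h : ¬ F.Countable) :
      (F ∩ (↑) '' (range p)ᶜ).Nonempty := nonempty_of_not_countable (not_countable_inter hF h)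
  refine ⟨A_rigid, hp, ?_, ?_, not_subsingleton_iff.1 fun h => ?_⟩
  · exact IsInducing.subtypeVal.dense_iff.2 fun x => dense_of_meets_isClosed meets x
  · exact IsInducing.subtypeVal.isPreconnected_image.1 (isPreconnected_of_meets_isClosed hV meets)
  · exact not_countable_inter isClosed_univ (not_countable_of_isOpen isOpen_univ univ_nonempty)
      ((h.image _).anti inter_subset_right).countable

theorem exists_isRigidBase (ι : Type*) [Countable ι] :
    ∃ (A : Set (ℝ × ℝ)) (p : ι → A), IsRigidBase p := by
  obtain ⟨A, A_rigid, hA⟩ := exists_locallyRigid (X := ℝ × ℝ) fun _ => not_countable_of_isOpen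
  have exists_fst_eq (t : ℝ) : ∃ x : A, x.1.1 = t := by
    have line_uncountable : ¬ (Prod.fst ⁻¹' {t} : Set (ℝ × ℝ)).Countable := fun h =>
      not_countable_of_continuum_le_mk (mk_univ_real.ge)
        ((h.preimage (Prod.mk_right_injective t)).mono fun _ _ => rfl)
    obtain ⟨x, hx, hxA⟩ := nonempty_of_not_countable
      (hA _ (isClosed_singleton.preimage continuous_fst) line_uncountable)
    exact ⟨⟨x, hxA⟩, hx⟩
  obtain ⟨code, code_inj⟩ := exists_injective_nat ι
  choose p hp using fun i => exists_fst_eq (code i)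
  have rank_plane : 1 < Module.rank ℝ (ℝ × ℝ) := by
    rw [rank_prod', Module.rank_self, one_add_one_eq_two]
    exact one_lt_two
  refine ⟨A, p, isRigidBase_of_meets_isClosed rank_plane hA A_rigid fun i j hij => ?_⟩
  have one_le : (1 : ℝ) ≤ dist (code i : ℝ) (code j) := by
    rw [Nat.dist_cast_real]
    exact Nat.pairwise_one_le_dist (code_inj.ne hij)
  exact (hp i ▸ hp j ▸ one_le).trans (le_max_left _ _)

end RigidBase

section Gluing

open Filter
open scoped UniformConvergence

variable {ι B E F : Type*}

section GlueRel

variable (p : ι → B) (r : ι → Setoid E)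

/-- The equivalence relation along which the copies of `B` are glued over the point `b`: it is
`r i` if `b = p i`, and equality if `b` is not of this form. -/
def glueRel (b : B) : Setoid E := ⨆ i, ⨆ _ : p i = b, r i

variable {p r}

lemma glueRel_apply (hp : Injective p) (i : ι) : glueRel p r (p i) = r i := by
  refine le_antisymm (iSup₂_le fun j hj => ?_) (le_iSup₂_of_le i rfl le_rfl)
  rw [hp hj]

lemma glueRel_of_notMem {b : B} (hb : b ∉ range p) : glueRel p r b = ⊥ :=
  bot_unique (iSup₂_le fun i hi => (hb ⟨i, hi⟩).elim)

/-- The map `φ` embeds the structure `(E, r)` into the structure `(F, r')`. -/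
structure IsRelEmb (r : ι → Setoid E) (r' : ι → Setoid F) (φ : E → F) : Prop where
  injective : Injective φ
  rel_iff : ∀ i x y, r' i (φ x) (φ y) ↔ r i x y

lemma IsRelEmb.symm {r' : ι → Setoid F} {φ : E ≃ F} (hφ : IsRelEmb r r' φ) :
    IsRelEmb r' r φ.symm :=
  ⟨φ.symm.injective, fun i x y => by
    rw [← hφ.rel_iff, φ.apply_symm_apply, φ.apply_symm_apply]⟩

lemma IsRelEmb.glueRel_iff {r' : ι → Setoid F} {φ : E → F}
    (hφ : IsRelEmb r r' φ) (hp : Injective p) {b : B} {x y : E} :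
    glueRel p r' b (φ x) (φ y) ↔ glueRel p r b x y := by
  by_cases hb : b ∈ range p
  · obtain ⟨i, rfl⟩ := hb
    rw [glueRel_apply hp, glueRel_apply hp, hφ.rel_iff]
  · rw [glueRel_of_notMem hb, glueRel_of_notMem hb]
    exact hφ.injective.eq_iff

end GlueRel

variable [MetricSpace B]

section Weights

/-- The weights of the coordinates of `Glued p r`. The coordinate `some i` lives near `p i`, the
coordinate `none` off `range p`. -/
noncomputable def weight (p : ι → B) (k : Option ι) (b : B) : ℝ :=
  k.elim (Metric.infDist b (range p)) fun i => max 0 (1 - dist b (p i))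

variable {p : ι → B} {r : ι → Setoid E}

lemma IsOneSeparated.injective (hp : IsOneSeparated p) : Injective p :=
  fun i j hij => by
    by_contra hne
    exact zero_lt_one.not_ge ((hp hne).trans_eq (by rw [hij, dist_self]))

lemma IsOneSeparated.isClosed_range (hp : IsOneSeparated p) : IsClosed (range p) :=
  Metric.isClosed_of_pairwise_le_dist zero_lt_one
    (Pairwise.range_pairwise (r := fun x y => 1 ≤ dist x y) hp)

lemma continuous_weight (k : Option ι) : Continuous (weight p k) := by
  cases k with
  | none => exact Metric.continuous_infDist_pt _
  | some i =>
    exact continuous_const.max (continuous_const.sub (continuous_id.dist continuous_const))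

lemma exists_weight_ne_zero [Nonempty ι] (hp : IsOneSeparated p) (b : B) :
    ∃ k, weight p k b ≠ 0 ∧ k.elim ⊥ r = glueRel p r b := by
  by_cases hb : b ∈ range p
  · obtain ⟨i, rfl⟩ := hb
    exact ⟨some i, by simp [weight], (glueRel_apply hp.injective i).symm⟩
  · exact ⟨none,
      fun h => hb ((hp.isClosed_range.mem_iff_infDist_zero (range_nonempty p)).2 h),
      (glueRel_of_notMem hb).symm⟩

lemma glueRel_le_of_weight_ne_zero (hp : IsOneSeparated p) {k : Option ι}
    {b : B} (hk : weight p k b ≠ 0) : glueRel p r b ≤ k.elim ⊥ r := by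
  refine iSup₂_le fun j hj => ?_
  subst hj
  cases k with
  | none => exact (hk (Metric.infDist_zero_of_mem (mem_range_self j))).elim
  | some i =>
    rcases eq_or_ne j i with rfl | hji
    · exact le_rfl
    · exact (hk (max_eq_left (sub_nonpos.2 (hp hji)))).elim

lemma eventually_glueRel_le [Nonempty ι] (hp : IsOneSeparated p) (b : B) :
    ∀ᶠ b' in 𝓝 b, glueRel p r b' ≤ glueRel p r b := by
  obtain ⟨k, hk, hk_eq⟩ := exists_weight_ne_zero (r := r) hp b
  filter_upwards [(continuous_weight k).continuousAt.eventually_ne hk] with b' hb'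
  exact hk_eq ▸ glueRel_le_of_weight_ne_zero hp hb'

end Weights

section Space

/-- The function on `E` with value `t` on `S` and `0` elsewhere, as a point of the space of
functions with the topology of uniform convergence. -/
noncomputable def pulse (S : Set E) (t : ℝ) : E →ᵤ ℝ := UniformFun.ofFun (S.indicator fun _ => t)

lemma edist_pulse_le {S T : Set E} {s t : ℝ} (h : S = T ∨ t = 0) :
    edist (pulse S s) (pulse T t) ≤ edist s t := by
  classical
  refine UniformFun.edist_le.2 fun x => ?_
  simp only [pulse, UniformFun.toFun_ofFun, indicator_apply]
  rcases h with rfl | rfl <;> split_ifs <;> simp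

lemma continuous_pulse (S : Set E) : Continuous (pulse S) :=
  LipschitzWith.continuous (K := 1) fun _ _ => by simpa using edist_pulse_le (.inl rfl)

lemma continuous_eval (x : E) : Continuous fun f : E →ᵤ ℝ => UniformFun.toFun f x :=
  (UniformFun.uniformContinuous_eval ℝ x).continuous

lemma toFun_pulse_ne_zero_iff {S : Set E} {t : ℝ} {x : E} :
    UniformFun.toFun (pulse S t) x ≠ 0 ↔ x ∈ S ∧ t ≠ 0 := by
  simp [pulse]

lemma setOf_rel_eq_of_rel {s : Setoid E} {e e' : E} (h : s e e') : {c | s c e} = {c | s c e'} :=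
  ext fun _ => ⟨fun hc => s.trans' hc h, fun hc => s.trans' hc (s.symm' h)⟩

/-- The space obtained from `E` copies of `B` by identifying, over each `p i`, the copies whose
indices are related by `r i`. It is realized in a metrizable space of functions: the coordinate
`k` records the class of the index of the copy, scaled by `weight p k`. -/
abbrev Glued (p : ι → B) (r : ι → Setoid E) : Type _ :=
  range fun x : E × B =>
    (x.2, fun k : Option ι => pulse {c | k.elim ⊥ r c x.1} (weight p k x.2))

namespace Glued

variable (p : ι → B) (r : ι → Setoid E)

/-- The point over `b` of the copy of `B` with index `e`. -/
noncomputable def mk (e : E) (b : B) : Glued p r := ⟨_, mem_range_self (e, b)⟩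

variable {p r}

/-- The projection of the glued space to `B`. -/
def proj (y : Glued p r) : B := y.1.1

@[simp] lemma proj_mk (e : E) (b : B) : proj (mk p r e b) = b := rfl

lemma exists_eq_mk (y : Glued p r) : ∃ e b, y = mk p r e b := by
  obtain ⟨_, ⟨e, b⟩, rfl⟩ := y
  exact ⟨e, b, rfl⟩

lemma continuous_proj : Continuous (proj (p := p) (r := r)) :=
  continuous_fst.comp continuous_subtype_val

lemma continuous_mk (e : E) : Continuous (mk p r e) :=
  continuous_induced_rng.2 <| continuous_id.prodMk <| continuous_pi fun k =>
    (continuous_pulse {c | k.elim ⊥ r c e}).comp (continuous_weight k)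

lemma mk_eq_mk_iff [Nonempty ι] (hp : IsOneSeparated p) {e e' : E}
    {b b' : B} : mk p r e b = mk p r e' b' ↔ b = b' ∧ glueRel p r b e e' := by
  constructor
  · intro h
    obtain rfl : b = b' := congrArg proj h
    obtain ⟨k, hk, hk_eq⟩ := exists_weight_ne_zero (r := r) hp b
    have coord_eq : pulse {c | k.elim ⊥ r c e} (weight p k b) =
        pulse {c | k.elim ⊥ r c e'} (weight p k b) := congrFun (congrArg (·.1.2) h) k
    have coord_ne : UniformFun.toFun (pulse {c | k.elim ⊥ r c e} (weight p k b)) e ≠ 0 :=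
      toFun_pulse_ne_zero_iff.2 ⟨Setoid.refl' _ e, hk⟩
    rw [coord_eq, toFun_pulse_ne_zero_iff] at coord_ne
    exact ⟨rfl, hk_eq ▸ coord_ne.1⟩
  · rintro ⟨rfl, h⟩
    refine Subtype.ext (Prod.ext rfl (funext fun k => edist_le_zero.1 ?_))
    refine (edist_pulse_le ?_).trans (edist_self (weight p k b)).le
    exact or_iff_not_imp_right.2 fun hk =>
      setOf_rel_eq_of_rel (glueRel_le_of_weight_ne_zero hp hk h)

lemma tendsto_mk (hp : IsOneSeparated p) (e : E) (b : B) :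
    Tendsto (fun x : B × E => mk p r x.2 x.1) (𝓝 b ×ˢ 𝓟 {e' | glueRel p r b e' e})
      (𝓝 (mk p r e b)) := by
  rw [tendsto_subtype_rng]
  refine tendsto_fst.prodMk_nhds (tendsto_pi_nhds.2 fun k => ?_)
  have weight_tendsto : Tendsto (fun x : B × E => weight p k x.1)
      (𝓝 b ×ˢ 𝓟 {e' | glueRel p r b e' e}) (𝓝 (weight p k b)) :=
    ((continuous_weight k).tendsto b).comp tendsto_fst
  rw [tendsto_iff_edist_tendsto_0] at weight_tendsto ⊢
  refine tendsto_of_tendsto_of_tendsto_of_le_of_le' tendsto_const_nhds weight_tendsto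
    (.of_forall fun _ => zero_le) ?_
  filter_upwards [prod_mem_prod univ_mem (mem_principal_self _)] with x hx
  exact edist_pulse_le <| or_iff_not_imp_right.2 fun hk =>
    setOf_rel_eq_of_rel (glueRel_le_of_weight_ne_zero hp hk hx.2)

lemma eventually_nhds_mk_iff [Nonempty ι] (hp : IsOneSeparated p) {e : E}
    {b : B} {P : Glued p r → Prop} :
    (∀ᶠ y in 𝓝 (mk p r e b), P y) ↔
      ∀ᶠ b' in 𝓝 b, ∀ e', glueRel p r b e' e → P (mk p r e' b') := by
  constructor
  · exact fun h => eventually_prod_principal_iff.1 ((tendsto_mk hp e b).eventually h)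
  · intro h
    obtain ⟨k, hk, hk_eq⟩ := exists_weight_ne_zero (r := r) hp b
    have coord_cont : Continuous fun y : Glued p r => UniformFun.toFun (y.1.2 k) e :=
      (continuous_eval e).comp ((continuous_apply k).comp continuous_subtype_val.snd)
    have coord_ne : UniformFun.toFun ((mk p r e b).1.2 k) e ≠ 0 :=
      toFun_pulse_ne_zero_iff.2 ⟨Setoid.refl' _ e, hk⟩
    filter_upwards [coord_cont.continuousAt.eventually_ne coord_ne,
      continuous_proj.continuousAt.eventually h] with y y_ne hy
    obtain ⟨e', b', rfl⟩ := exists_eq_mk y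
    have := (toFun_pulse_ne_zero_iff.1 y_ne).1
    exact hy e' (hk_eq ▸ Setoid.symm' _ this)

/-- The union of the copies of `B` with index in `S`. -/
def sheets (p : ι → B) (r : ι → Setoid E) (S : Set E) : Set (Glued p r) :=
  {y | ∃ e ∈ S, ∃ b, y = mk p r e b}

lemma isClosed_sheets [Nonempty ι] (hp : IsOneSeparated p) (S : Set E) :
    IsClosed (sheets p r S) := by
  refine isOpen_compl_iff.1 (isOpen_iff_mem_nhds.2 fun y hy => ?_)
  obtain ⟨e, b, rfl⟩ := exists_eq_mk y
  refine (eventually_nhds_mk_iff hp).2 ?_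
  filter_upwards [eventually_glueRel_le (r := r) hp b] with b' hb' e' he'
  rintro ⟨c, hcS, b'', h⟩
  obtain ⟨rfl, hc⟩ := (mk_eq_mk_iff hp).1 h
  refine hy ⟨c, hcS, b, (mk_eq_mk_iff hp).2 ⟨rfl, ?_⟩⟩
  exact Setoid.trans' _ (Setoid.symm' _ he') (hb' hc)

lemma isClopen_sheets [Nonempty ι] (hp : IsOneSeparated p) {S : Set E}
    (hS : ∀ i x y, r i x y → y ∈ S → x ∈ S) : IsClopen (sheets p r S) := by
  refine ⟨isClosed_sheets hp S, isOpen_iff_mem_nhds.2 ?_⟩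
  rintro _ ⟨e, he, b, rfl⟩
  have glueRel_le : glueRel p r b ≤ Setoid.ker (· ∈ S) :=
    iSup₂_le fun i _ x y h => propext ⟨hS i y x (Setoid.symm' _ h), hS i x y h⟩
  refine (eventually_nhds_mk_iff hp).2 (.of_forall fun b' e' he' => ?_)
  exact ⟨e', (glueRel_le he').mpr he, b', rfl⟩

variable {r' : ι → Setoid F} {φ : E → F}

/-- The map of glued spaces which sends the copy with index `e` to the copy with index `φ e`. It
is defined through a choice of indices, which is immaterial if `φ` respects the relations. -/
noncomputable def mapIndex (r' : ι → Setoid F) (φ : E → F) (y : Glued p r) : Glued p r' :=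
  mk p r' (φ (exists_eq_mk y).choose) (proj y)

lemma mapIndex_mk [Nonempty ι] (hp : IsOneSeparated p) (hφ : IsRelEmb r r' φ) (e : E) (b : B) :
    mapIndex r' φ (mk p r e b) = mk p r' (φ e) b := by
  obtain ⟨b', h⟩ := (exists_eq_mk (mk p r e b)).choose_spec
  obtain ⟨rfl, he⟩ := (mk_eq_mk_iff hp).1 h
  exact (mk_eq_mk_iff hp).2 ⟨rfl, (hφ.glueRel_iff hp.injective).2 (Setoid.symm' _ he)⟩

lemma range_mapIndex [Nonempty ι] (hp : IsOneSeparated p) (hφ : IsRelEmb r r' φ) :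
    range (mapIndex r' φ : Glued p r → Glued p r') = sheets p r' (range φ) := by
  ext z
  constructor
  · rintro ⟨y, rfl⟩
    exact ⟨_, mem_range_self _, _, rfl⟩
  · rintro ⟨_, ⟨e, rfl⟩, b, rfl⟩
    exact ⟨mk p r e b, mapIndex_mk hp hφ e b⟩

lemma injective_mapIndex [Nonempty ι] (hp : IsOneSeparated p) (hφ : IsRelEmb r r' φ) :
    Injective (mapIndex r' φ : Glued p r → Glued p r') := by
  intro y z h
  obtain ⟨e, b, rfl⟩ := exists_eq_mk y
  obtain ⟨e', b', rfl⟩ := exists_eq_mk z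
  rw [mapIndex_mk hp hφ, mapIndex_mk hp hφ, mk_eq_mk_iff hp] at h
  exact (mk_eq_mk_iff hp).2 ⟨h.1, (hφ.glueRel_iff hp.injective).1 h.2⟩

lemma isInducing_mapIndex [Nonempty ι] (hp : IsOneSeparated p) (hφ : IsRelEmb r r' φ) :
    IsInducing (mapIndex r' φ : Glued p r → Glued p r') := by
  refine isInducing_iff_nhds.2 fun y => Filter.ext fun U => ?_
  obtain ⟨e, b, rfl⟩ := exists_eq_mk y
  change (∀ᶠ y in 𝓝 (mk p r e b), y ∈ U) ↔ ∀ᶠ y in comap (mapIndex r' φ) _, y ∈ U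
  rw [eventually_comap, mapIndex_mk hp hφ, eventually_nhds_mk_iff hp, eventually_nhds_mk_iff hp]
  constructor
  · intro h
    filter_upwards [h, eventually_glueRel_le (r := r') hp b] with b' hU hle c hc y hy
    obtain ⟨e', b'', rfl⟩ := exists_eq_mk y
    obtain ⟨rfl, he'⟩ := (mk_eq_mk_iff hp).1 ((mapIndex_mk hp hφ e' b'').symm.trans hy)
    exact hU e' ((hφ.glueRel_iff hp.injective).1 (Setoid.trans' _ (hle he') hc))
  · intro h
    filter_upwards [h] with b' hU e' he'
    exact hU _ ((hφ.glueRel_iff hp.injective).2 he') _ (mapIndex_mk hp hφ e' b')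

theorem isClosedEmbedding_mapIndex [Nonempty ι] (hp : IsOneSeparated p) (hφ : IsRelEmb r r' φ) :
    IsClosedEmbedding (mapIndex r' φ : Glued p r → Glued p r') :=
  ⟨⟨isInducing_mapIndex hp hφ, injective_mapIndex hp hφ⟩,
    range_mapIndex hp hφ ▸ isClosed_sheets hp _⟩

end Glued

end Space

section Injections

namespace Glued

variable [Nonempty ι] {p : ι → B} {r : ι → Setoid E}

/-- The part of the copy of `B` with index `e` lying off `range p`, where nothing is glued. -/
def edge (p : ι → B) (r : ι → Setoid E) (e : E) : Set (Glued p r) := mk p r e '' (range p)ᶜ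

lemma isOpen_edge (hp : IsOneSeparated p) (e : E) : IsOpen (edge p r e) := by
  refine isOpen_iff_mem_nhds.2 ?_
  rintro _ ⟨b, hb, rfl⟩
  refine (eventually_nhds_mk_iff hp).2 ?_
  filter_upwards [hp.isClosed_range.isOpen_compl.mem_nhds hb] with b' hb' e' he'
  rw [glueRel_of_notMem hb] at he'
  exact ⟨b', hb', he' ▸ rfl⟩

lemma eventually_proj_eq_imp_eq (hp : IsOneSeparated p) (y : Glued p r) :
    ∀ᶠ z in 𝓝 y, proj z = proj y → z = y := by
  obtain ⟨e, b, rfl⟩ := exists_eq_mk y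
  refine (eventually_nhds_mk_iff hp).2 (.of_forall fun b' e' he' h => ?_)
  obtain rfl : b' = b := h
  exact (mk_eq_mk_iff hp).2 ⟨rfl, he'⟩

lemma isTotallyDisconnected_fiber (hp : IsOneSeparated p) (b : B) :
    IsTotallyDisconnected (proj ⁻¹' {b} : Set (Glued p r)) := by
  have : DiscreteTopology (proj ⁻¹' {b} : Set (Glued p r)) := by
    refine discreteTopology_iff_singleton_mem_nhds.2 fun y => ?_
    filter_upwards [continuous_subtype_val.continuousAt.eventually
      (eventually_proj_eq_imp_eq hp y.1)] with z hz
    exact Subtype.ext (hz (z.2.trans y.2.symm))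
  exact totallyDisconnectedSpace_subtype_iff.1 inferInstance

variable {g : B → Glued p r}

lemma eq_mk_of_mem_edge (hp : IsRigidBase p) (g_cont : Continuous g) (g_inj : Injective g)
    {e : E} {b : B} (h : g b ∈ edge p r e) : g b = mk p r e b := by
  have proj_injOn : InjOn proj (edge p r e) := by
    rintro _ ⟨b, -, rfl⟩ _ ⟨b', -, rfl⟩ h
    exact congrArg _ h
  have proj_eq : proj (g b) = b :=
    hp.locallyRigid (g ⁻¹' edge p r e) ((isOpen_edge hp.isOneSeparated e).preimage g_cont)
      (fun x => proj (g x)) (continuous_proj.comp (g_cont.comp continuous_subtype_val))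
      (fun x y hxy => Subtype.ext (g_inj (proj_injOn x.2 y.2 hxy))) ⟨b, h⟩
  obtain ⟨b', -, hb'⟩ := h
  rw [← hb', ← proj_eq, ← hb', proj_mk]

/-- Otherwise `g` would map the connected set `(range p)ᶜ` into the preimage of the countable set
`range p` under `proj`, which is totally disconnected. -/
lemma exists_mem_edge [Countable ι] (hp : IsRigidBase p) (g_cont : Continuous g)
    (g_inj : Injective g) : ∃ b ∉ range p, ∃ e, g b ∈ edge p r e := by
  by_contra! h
  have proj_mem (b : B) (hb : b ∈ (range p)ᶜ) : proj (g b) ∈ range p := by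
    obtain ⟨e, b', hg⟩ := exists_eq_mk (g b)
    exact hg ▸ of_not_not fun hb' => h b hb e ⟨b', hb', hg.symm⟩
  have proj_subsingleton : ((fun b => proj (g b)) '' (range p)ᶜ).Subsingleton :=
    (countable_range p).isTotallyDisconnected _ (image_subset_iff.2 proj_mem)
      (hp.isPreconnected_compl.image _ (continuous_proj.comp g_cont).continuousOn)
  obtain ⟨b, hb, b', hb', hne⟩ := hp.nontrivial_compl
  refine hne (g_inj (isTotallyDisconnected_fiber hp.isOneSeparated (proj (g b)) _ ?_
    (hp.isPreconnected_compl.image _ g_cont.continuousOn)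
    (mem_image_of_mem _ hb) (mem_image_of_mem _ hb')))
  rintro _ ⟨c, hc, rfl⟩
  exact proj_subsingleton (mem_image_of_mem _ hc) (mem_image_of_mem _ hb)

theorem exists_eq_mk_of_injective [Countable ι] (hp : IsRigidBase p) (g_cont : Continuous g)
    (g_inj : Injective g) : ∃ e, ∀ b, g b = mk p r e b := by
  obtain ⟨b₀, hb₀, e, he⟩ := exists_mem_edge hp g_cont g_inj
  have closure_sub : closure (g ⁻¹' edge p r e) ⊆ {b | g b = mk p r e b} :=
    closure_minimal (fun _ => eq_mk_of_mem_edge hp g_cont g_inj)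
      (isClosed_eq g_cont (continuous_mk e))
  have compl_sub : (range p)ᶜ ⊆ g ⁻¹' edge p r e :=
    hp.isPreconnected_compl.subset_of_closure_inter_subset
      ((isOpen_edge hp.isOneSeparated e).preimage g_cont) ⟨b₀, hb₀, he⟩
      fun b hb => ⟨b, hb.2, (closure_sub hb.1).symm⟩
  exact ⟨e, congrFun (g_cont.ext_on hp.dense_compl (continuous_mk e) fun _ hb =>
    eq_mk_of_mem_edge hp g_cont g_inj (compl_sub hb))⟩

lemma injective_mk_apply (hp : IsOneSeparated p) {b : B} (hb : b ∉ range p) :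
    Injective fun e => mk p r e b := by
  intro x y hxy
  have := ((mk_eq_mk_iff hp).1 hxy).2
  rwa [glueRel_of_notMem hb] at this

variable {r' : ι → Setoid F}

theorem exists_isRelEmb_of_injective [Countable ι] (hp : IsRigidBase p)
    {f : Glued p r → Glued p r'} (f_cont : Continuous f) (f_inj : Injective f) :
    ∃ φ : E → F, IsRelEmb r r' φ ∧ ∀ e b, f (mk p r e b) = mk p r' (φ e) b := by
  choose φ hφ using fun e => exists_eq_mk_of_injective hp (f_cont.comp (continuous_mk e))
    (f_inj.comp fun b b' h => congrArg proj h)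
  simp only [comp_apply] at hφ
  have glueRel_iff (b : B) (x y : E) :
      glueRel p r' b (φ x) (φ y) ↔ glueRel p r b x y := by
    have := f_inj.eq_iff (a := mk p r x b) (b := mk p r y b)
    rwa [hφ, hφ, mk_eq_mk_iff hp.isOneSeparated, mk_eq_mk_iff hp.isOneSeparated,
      and_iff_right rfl, and_iff_right rfl] at this
  refine ⟨φ, ⟨fun x y hxy => ?_, fun i x y => ?_⟩, hφ⟩
  · obtain ⟨b, hb⟩ := hp.nontrivial_compl.nonempty
    exact injective_mk_apply hp.isOneSeparated hb (f_inj (by simp only [hφ, hxy]))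
  · have := glueRel_iff (p i) x y
    rwa [glueRel_apply hp.isOneSeparated.injective,
      glueRel_apply hp.isOneSeparated.injective] at this

theorem exists_isRelEmb_of_homeomorph [Countable ι] (hp : IsRigidBase p)
    (h : Glued p r ≃ₜ Glued p r') : ∃ φ : E ≃ F, IsRelEmb r r' φ := by
  obtain ⟨φ, hφ, h_mk⟩ := exists_isRelEmb_of_injective hp h.continuous h.injective
  obtain ⟨ψ, -, symm_mk⟩ := exists_isRelEmb_of_injective hp h.symm.continuous h.symm.injective
  obtain ⟨b, hb⟩ := hp.nontrivial_compl.nonempty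
  refine ⟨⟨φ, ψ, fun x => ?_, fun y => ?_⟩, hφ⟩
  · refine injective_mk_apply (r := r) hp.isOneSeparated hb ?_
    simp only [← symm_mk, ← h_mk, h.symm_apply_apply]
  · refine injective_mk_apply (r := r') hp.isOneSeparated hb ?_
    simp only [← symm_mk, ← h_mk, h.apply_symm_apply]

end Glued

end Injections

section Cardinality

namespace Glued

variable {ι B : Type} {E : Type u} [Nonempty ι] [MetricSpace B] {p : ι → B} {r : ι → Setoid E}

lemma cardinal_mk_eq (hp : IsRigidBase p) (hE : ℵ₀ ≤ #E) (hB : lift.{u} #B ≤ #E) :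
    #(Glued p r) = #E := by
  apply le_antisymm
  · calc #(Glued p r) ≤ #(E × B) := mk_range_le
      _ = #E * lift.{u} #B := by rw [mk_prod, lift_id'.{0, u}]
      _ ≤ #E := mul_le_of_le hE le_rfl hB
  · obtain ⟨b, hb⟩ := hp.nontrivial_compl.nonempty
    exact mk_le_of_injective (injective_mk_apply hp.isOneSeparated hb)

end Glued

end Cardinality

end Gluing

section LadderSystems

variable {O : Type*} [LinearOrder O]

/-- For each `y`, a sequence `l y` with supremum `y`, which lies strictly below `y` whenever some
sequence with supremum `y` does, that is, whenever `y` is a limit of countable cofinality. -/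
structure IsLadderSystem (l : O → ℕ → O) : Prop where
  isLUB : ∀ y, IsLUB (range (l y)) y
  lt : ∀ y (s : ℕ → O), (∀ n, s n < y) → IsLUB (range s) y → ∀ n, l y n < y

lemma exists_isLadderSystem (O : Type*) [LinearOrder O] :
    ∃ l : O → ℕ → O, IsLadderSystem l := by
  have (y : O) : ∃ t : ℕ → O, IsLUB (range t) y ∧
      ∀ s : ℕ → O, (∀ n, s n < y) → IsLUB (range s) y → ∀ n, t n < y := by
    by_cases h : ∃ s : ℕ → O, (∀ n, s n < y) ∧ IsLUB (range s) y
    · obtain ⟨s, s_lt, hs⟩ := h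
      exact ⟨s, hs, fun _ _ _ => s_lt⟩
    · exact ⟨fun _ => y, by simp, fun s s_lt hs => (h ⟨s, s_lt, hs⟩).elim⟩
  choose l hl using this
  exact ⟨l, fun y => (hl y).1, fun y => (hl y).2⟩

lemma exists_isLUB_of_wellFoundedLT [WellFoundedLT O] [OrderTop O] (s : Set O) :
    ∃ y, IsLUB s y :=
  have bounded : (upperBounds s).Nonempty := ⟨⊤, fun _ _ => le_top⟩
  ⟨wellFounded_lt.min _ bounded, wellFounded_lt.min_mem _ bounded,
    fun _ hy => not_lt.1 (wellFounded_lt.not_lt_min _ hy)⟩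

variable [WellFoundedLT O] {l : O → ℕ → O} {f : O → O}

lemma IsLadderSystem.map_eq_of_isLUB (hl : IsLadderSystem l) (hf : StrictMono f)
    (hfl : ∀ y n, f (l y n) = l (f y) n) {s : ℕ → O} {y : O} (hs : IsLUB (range s) y)
    (map_lt : ∀ n, f (s n) < y) : f y = y := by
  refine le_antisymm ((hl.isLUB (f y)).2 ?_) hf.le_apply
  rintro _ ⟨n, rfl⟩
  have rung_lt : l y n < y := hl.lt y s (fun m => hf.le_apply.trans_lt (map_lt m)) hs n
  obtain ⟨_, ⟨m, rfl⟩, rung_lt_s⟩ := (lt_isLUB_iff hs).1 rung_lt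
  exact hfl y n ▸ ((hf rung_lt_s).trans (map_lt m)).le

/-- If `f` moved `x`, then the supremum of the orbit of `x` would be fixed by `f`, hence so would
the rungs of its ladder; but a fixed point above `x` bounds the orbit of `x`. -/
theorem IsLadderSystem.map_eq_self [OrderTop O] (hl : IsLadderSystem l) (hf : StrictMono f)
    (hfl : ∀ y n, f (l y n) = l (f y) n) (x : O) : f x = x := by
  by_contra hne
  have orbit_strictMono : StrictMono fun n => f^[n] x :=
    hf.strictMono_iterate_of_lt_map (hf.le_apply.lt_of_ne' hne)
  obtain ⟨y, hy⟩ := exists_isLUB_of_wellFoundedLT (range fun n => f^[n] x)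
  have orbit_lt (n : ℕ) : f^[n] x < y :=
    (orbit_strictMono n.lt_succ_self).trans_le (hy.1 (mem_range_self _))
  have y_fixed : f y = y :=
    hl.map_eq_of_isLUB hf hfl hy fun n => iterate_succ_apply' f n x ▸ orbit_lt (n + 1)
  have rung_fixed (n : ℕ) : f (l y n) = l y n := by rw [hfl, y_fixed]
  obtain ⟨_, ⟨n, rfl⟩, x_lt⟩ := (lt_isLUB_iff (hl.isLUB y)).1 (orbit_lt 0)
  refine (hl.lt y _ orbit_lt hy n).not_ge (hy.2 ?_)
  rintro _ ⟨m, rfl⟩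
  exact iterate_fixed (rung_fixed n) m ▸ (hf.monotone.iterate m) x_lt.le

end LadderSystems

section SigmaRel

variable {ι C C' : Type*} {D : C → Type*} {D' : C' → Type*}
  {r : ∀ c, ι → Setoid (D c)} {r' : ∀ c, ι → Setoid (D' c)}

/-- The disjoint union of the structures `(D c, r c)`. -/
def sigmaRel (r : ∀ c, ι → Setoid (D c)) (i : ι) : Setoid (Σ c, D c) where
  r s t := ∃ h : s.1 = t.1, r t.1 i (h ▸ s.2) t.2
  iseqv := by
    refine ⟨fun s => ⟨rfl, Setoid.refl' _ _⟩, ?_, ?_⟩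
    · rintro ⟨c, x⟩ ⟨c', y⟩ ⟨h, hxy⟩
      cases h
      exact ⟨rfl, Setoid.symm' _ hxy⟩
    · rintro ⟨c, x⟩ ⟨c', y⟩ ⟨c'', z⟩ ⟨h, hxy⟩ ⟨h', hyz⟩
      cases h
      cases h'
      exact ⟨rfl, Setoid.trans' _ hxy hyz⟩

lemma sigmaRel_mk_iff {i : ι} {c : C} {x y : D c} : sigmaRel r i ⟨c, x⟩ ⟨c, y⟩ ↔ r c i x y :=
  ⟨fun ⟨_, h⟩ => h, fun h => ⟨rfl, h⟩⟩

lemma IsRelEmb.sigmaMap {γ : C → C'} (hγ : Injective γ) {ψ : ∀ c, D c → D' (γ c)}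
    (hψ : ∀ c, IsRelEmb (r c) (r' (γ c)) (ψ c)) :
    IsRelEmb (sigmaRel r) (sigmaRel r') (Sigma.map γ ψ) := by
  refine ⟨hγ.sigma_map fun c => (hψ c).injective, ?_⟩
  rintro i ⟨c, x⟩ ⟨c', y⟩
  by_cases h : c = c'
  · subst h
    exact sigmaRel_mk_iff.trans (((hψ c).rel_iff i x y).trans sigmaRel_mk_iff.symm)
  · exact iff_of_false (fun h' => h (hγ h'.1)) fun h' => h h'.1

/-- The relation `i₀` forces an embedding to map each summand into a single summand. -/
lemma IsRelEmb.exists_sigma {i₀ : ι} (hr : ∀ c, r c i₀ = ⊤) [∀ c, Nonempty (D c)]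
    {φ : (Σ c, D c) → Σ c, D' c} (hφ : IsRelEmb (sigmaRel r) (sigmaRel r') φ) (c : C) :
    ∃ (c' : C') (ψ : D c → D' c'), IsRelEmb (r c) (r' c') ψ ∧ ∀ x, φ ⟨c, x⟩ = ⟨c', ψ x⟩ := by
  obtain ⟨x₀⟩ := ‹∀ c, Nonempty (D c)› c
  obtain ⟨c', same_summand⟩ : ∃ c', ∀ x, ∃ y : D' c', φ ⟨c, x⟩ = ⟨c', y⟩ := by
    refine ⟨(φ ⟨c, x₀⟩).1, fun x => ?_⟩
    have rel : sigmaRel r i₀ ⟨c, x⟩ ⟨c, x₀⟩ := sigmaRel_mk_iff.2 (by rw [hr]; trivial)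
    obtain ⟨h, -⟩ := (hφ.rel_iff i₀ _ _).2 rel
    exact ⟨h ▸ (φ ⟨c, x⟩).2, Sigma.ext h (by simp)⟩
  choose ψ hψ using same_summand
  refine ⟨c', ψ, ⟨fun x y h => ?_, fun i x y => ?_⟩, hψ⟩
  · exact sigma_mk_injective (hφ.injective (by rw [hψ, hψ, h]))
  · rw [← sigmaRel_mk_iff (r := r), ← hφ.rel_iff, hψ, hψ, sigmaRel_mk_iff]

lemma IsRelEmb.exists_sigma_of_equiv {i₀ : ι} (hr : ∀ c, r c i₀ = ⊤) (hr' : ∀ c, r' c i₀ = ⊤)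
    [∀ c, Nonempty (D c)] [∀ c, Nonempty (D' c)] {φ : (Σ c, D c) ≃ Σ c, D' c}
    (hφ : IsRelEmb (sigmaRel r) (sigmaRel r') φ) (c : C) :
    ∃ c', (∃ ψ, IsRelEmb (r c) (r' c') ψ) ∧ ∃ ψ, IsRelEmb (r' c') (r c) ψ := by
  obtain ⟨c', ψ, hψ, φ_eq⟩ := hφ.exists_sigma hr c
  obtain ⟨c'', ψ', hψ', symm_eq⟩ := hφ.symm.exists_sigma hr' c'
  obtain ⟨x⟩ := ‹∀ c, Nonempty (D c)› c
  obtain rfl : c = c'' :=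
    congrArg Sigma.fst ((φ.symm_apply_eq.2 (φ_eq x).symm).symm.trans (symm_eq (ψ x)))
  exact ⟨c', ⟨ψ, hψ⟩, ψ', hψ'⟩

end SigmaRel

section Cells

/-- Names for the distinguished sets of pairs of a cell; see `Color.pairs`. -/
inductive Color
  | diag
  | le
  | mark
  | rung (n : ℕ)
  deriving Countable

/-- Names for the equivalence relations of a cell; see `cellRel`. -/
inductive CellRel
  | whole
  | fst
  | snd
  | color (c : Color)
  deriving Countable, Inhabited

variable {O : Type*} [LinearOrder O] [OrderTop O]

/-- The pairs of the color `c` in a cell with parameter `i`. They encode the order of `O`, the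
ladder system `l` and the point `i`. The pair `(i, ⊤)` serves to make `mark` have two pairs. -/
def Color.pairs (l : O → ℕ → O) (i : O) : Color → Set (O × O)
  | diag => diagonal O
  | le => {z | z.1 ≤ z.2}
  | mark => {(i, i), (i, ⊤)}
  | rung n => {z | z.1 = l z.2 n}

lemma Color.nontrivial_pairs [Nontrivial O] (l : O → ℕ → O) {i : O} (hi : i ≠ ⊤) (c : Color) :
    (c.pairs l i).Nontrivial := by
  obtain ⟨x, y, hxy⟩ := exists_pair_ne O
  cases c with
  | diag => exact ⟨(x, x), rfl, (y, y), rfl, by simpa using hxy⟩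
  | le => exact ⟨(x, x), le_rfl, (y, y), le_rfl, by simpa using hxy⟩
  | mark => exact nontrivial_pair (by simpa using hi)
  | rung n => exact ⟨(l x n, x), rfl, (l y n, y), rfl, by simp [hxy]⟩

/-- The equivalence relation whose only nontrivial class is `s`. -/
def collapse {X : Type*} (s : Set X) : Setoid X where
  r x y := x = y ∨ x ∈ s ∧ y ∈ s
  iseqv := by
    refine ⟨fun _ => .inl rfl, ?_, ?_⟩
    · rintro x y (rfl | h)
      exacts [.inl rfl, .inr h.symm]
    · rintro x y z (rfl | h) (rfl | h')
      exacts [.inl rfl, .inr h', .inr h, .inr ⟨h.1, h'.2⟩]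

/-- The cell with parameters `i` and `n`: a structure on `O × O` together with `n` extra points,
into which only the cells with the same `i` and with smaller or equal `n` embed. -/
def cellRel (l : O → ℕ → O) (i : O) (n : ℕ) : CellRel → Setoid ((O × O) ⊕ Fin n)
  | .whole => ⊤
  | .fst => Setoid.ker (Sum.map Prod.fst id)
  | .snd => Setoid.ker (Sum.map Prod.snd id)
  | .color c => collapse (Sum.inl '' c.pairs l i)

lemma cellRel_fst_iff {l : O → ℕ → O} {i : O} {n : ℕ} {x y : (O × O) ⊕ Fin n} :
    cellRel l i n .fst x y ↔ Sum.map Prod.fst id x = Sum.map Prod.fst id y := Iff.rfl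

lemma cellRel_snd_iff {l : O → ℕ → O} {i : O} {n : ℕ} {x y : (O × O) ⊕ Fin n} :
    cellRel l i n .snd x y ↔ Sum.map Prod.snd id x = Sum.map Prod.snd id y := Iff.rfl

lemma cellRel_color_iff {l : O → ℕ → O} {i : O} {n : ℕ} {c : Color} {x y : (O × O) ⊕ Fin n} :
    cellRel l i n (.color c) x y ↔
      x = y ∨ x ∈ Sum.inl '' c.pairs l i ∧ y ∈ Sum.inl '' c.pairs l i := Iff.rfl

lemma isRelEmb_sumMap_castLE (l : O → ℕ → O) (i : O) {n m : ℕ} (h : n ≤ m) :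
    IsRelEmb (cellRel l i n) (cellRel l i m) (Sum.map id (Fin.castLE h)) := by
  have inj := Fin.castLE_injective h
  refine ⟨injective_id.sumMap inj, fun k x y => ?_⟩
  cases k with
  | whole => rfl
  | fst => rcases x with x | x <;> rcases y with y | y <;> simp [cellRel_fst_iff]
  | snd => rcases x with x | x <;> rcases y with y | y <;> simp [cellRel_snd_iff]
  | color c => rcases x with x | x <;> rcases y with y | y <;> simp [cellRel_color_iff]

section CellEmbeddings

variable {l : O → ℕ → O} {i j : O} {n m : ℕ} {φ : (O × O) ⊕ Fin n → (O × O) ⊕ Fin m}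

lemma IsRelEmb.exists_mem_pairs (hφ : IsRelEmb (cellRel l i n) (cellRel l j m) φ)
    [Nontrivial O] (hi : i ≠ ⊤) {c : Color} {z : O × O} (hz : z ∈ c.pairs l i) :
    ∃ w ∈ c.pairs l j, φ (.inl z) = .inl w := by
  obtain ⟨z', hz', hne⟩ := (c.nontrivial_pairs l hi).exists_ne z
  have rel : cellRel l i n (.color c) (.inl z) (.inl z') :=
    .inr ⟨mem_image_of_mem _ hz, mem_image_of_mem _ hz'⟩
  rcases (hφ.rel_iff _ _ _).2 rel with h | ⟨⟨w, hw, h⟩, -⟩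
  · exact (hne (Sum.inl_injective (hφ.injective h)).symm).elim
  · exact ⟨w, hw, h.symm⟩

lemma IsRelEmb.exists_map_inl_eq (hφ : IsRelEmb (cellRel l i n) (cellRel l j m) φ)
    [Nontrivial O] (hi : i ≠ ⊤) : ∃ f : O → O, ∀ x y, φ (.inl (x, y)) = .inl (f x, f y) := by
  have map_diag (x : O) : ∃ a, φ (.inl (x, x)) = .inl (a, a) := by
    obtain ⟨⟨a, b⟩, hab, h⟩ := hφ.exists_mem_pairs hi (c := .diag) (z := (x, x)) rfl
    obtain rfl : a = b := hab
    exact ⟨a, h⟩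
  choose f hf using map_diag
  refine ⟨f, fun x y => ?_⟩
  have fst_eq := (hφ.rel_iff .fst (.inl (x, y)) (.inl (x, x))).2 rfl
  have snd_eq := (hφ.rel_iff .snd (.inl (x, y)) (.inl (y, y))).2 rfl
  rw [hf, cellRel_fst_iff] at fst_eq
  rw [hf, cellRel_snd_iff] at snd_eq
  rcases h : φ (.inl (x, y)) with ⟨a, b⟩ | k <;> rw [h] at fst_eq snd_eq
  · exact congrArg Sum.inl (Prod.ext (Sum.inl_injective fst_eq) (Sum.inl_injective snd_eq))
  · exact (Sum.inr_ne_inl fst_eq).elim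

lemma IsRelEmb.map_inl [WellFoundedLT O] (hφ : IsRelEmb (cellRel l i n) (cellRel l j m) φ)
    [Nontrivial O] (hi : i ≠ ⊤) (hl : IsLadderSystem l) (z : O × O) :
    φ (.inl z) = .inl z := by
  obtain ⟨f, hf⟩ := hφ.exists_map_inl_eq hi
  have map_mem {c : Color} {x y : O} (h : (x, y) ∈ c.pairs l i) : (f x, f y) ∈ c.pairs l j := by
    obtain ⟨w, hw, h⟩ := hφ.exists_mem_pairs hi h
    exact Sum.inl_injective ((hf x y).symm.trans h) ▸ hw
  have f_inj : Injective f := fun x y h => by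
    have := hφ.injective ((hf x x).trans ((congrArg _ (by rw [h])).trans (hf y y).symm))
    exact (Prod.ext_iff.1 (Sum.inl_injective this)).1
  have f_mono : Monotone f := fun x y h => map_mem (c := .le) h
  have f_eq := hl.map_eq_self (f_mono.strictMono_of_injective f_inj)
    fun y k => map_mem (c := .rung k) rfl
  rw [hf, f_eq, f_eq]

end CellEmbeddings

lemma le_of_injective_of_map_inl {A : Type*} {n m : ℕ} {φ : A ⊕ Fin n → A ⊕ Fin m}
    (hφ : Injective φ) (map_inl : ∀ a, φ (.inl a) = .inl a) : n ≤ m := by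
  have map_inr (k : Fin n) : ∃ k', φ (.inr k) = .inr k' := by
    rcases h : φ (.inr k) with a | k'
    · exact (Sum.inr_ne_inl (hφ (h.trans (map_inl a).symm))).elim
    · exact ⟨k', rfl⟩
  choose ρ hρ using map_inr
  have ρ_inj : Injective ρ := fun k k' h =>
    Sum.inr_injective (hφ ((hρ k).trans ((congrArg _ h).trans (hρ k').symm)))
  simpa using Fintype.card_le_of_injective ρ ρ_inj

theorem exists_isRelEmb_cellRel_iff [WellFoundedLT O] [Nontrivial O] {l : O → ℕ → O}
    (hl : IsLadderSystem l) {i j : O} (hi : i ≠ ⊤) {n m : ℕ} :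
    (∃ φ, IsRelEmb (cellRel l i n) (cellRel l j m) φ) ↔ i = j ∧ n ≤ m := by
  constructor
  · rintro ⟨φ, hφ⟩
    have map_inl := hφ.map_inl hi hl
    obtain ⟨w, hw, h⟩ := hφ.exists_mem_pairs hi (c := .mark) (z := (i, i)) (.inl rfl)
    obtain rfl : (i, i) = w := Sum.inl_injective ((map_inl (i, i)).symm.trans h)
    refine ⟨?_, le_of_injective_of_map_inl hφ.injective map_inl⟩
    rcases hw with hw | hw <;> exact (Prod.ext_iff.1 hw).1
  · rintro ⟨rfl, h⟩
    exact ⟨_, isRelEmb_sumMap_castLE l i h⟩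

end Cells

section Blocks

variable {ι C B : Type*} {D : C → Type*} [Nonempty ι] [MetricSpace B] {p : ι → B}
  {r : ∀ c, ι → Setoid (D c)} {I J : Set C}

/-- The subspace of the glued space of `sigmaRel r` formed by the summands with index in `I`. -/
def block (p : ι → B) (r : ∀ c, ι → Setoid (D c)) (I : Set C) : Set (Glued p (sigmaRel r)) :=
  Glued.sheets p (sigmaRel r) (Sigma.fst ⁻¹' I)

lemma isClopen_block (hp : IsOneSeparated p) : IsClopen (block p r I) :=
  Glued.isClopen_sheets hp fun _ _ _ h hy => mem_preimage.2 (h.1.symm ▸ hy)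

lemma nonempty_homeomorph_block (hp : IsOneSeparated p) :
    Nonempty (Glued p (sigmaRel fun c : I => r c) ≃ₜ block p r I) := by
  have incl_emb : IsRelEmb (sigmaRel fun c : I => r c) (sigmaRel r)
      (Sigma.map Subtype.val fun _ => id) :=
    .sigmaMap Subtype.val_injective fun _ => ⟨injective_id, fun _ _ _ => Iff.rfl⟩
  have range_incl : range (Sigma.map Subtype.val fun c : I => @id (D c)) = Sigma.fst ⁻¹' I := by
    ext ⟨c, x⟩
    constructor
    · rintro ⟨⟨c', x'⟩, h⟩
      exact h ▸ c'.2
    · exact fun hc => ⟨⟨⟨c, hc⟩, x⟩, rfl⟩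
  have range_eq := Glued.range_mapIndex hp incl_emb
  rw [range_incl] at range_eq
  exact ⟨(Glued.isClosedEmbedding_mapIndex hp incl_emb).isEmbedding.toHomeomorph.trans
    (Homeomorph.setCongr range_eq)⟩

lemma homeoToClosedSubset_block (hp : IsOneSeparated p) {γ : I → J} (hγ : Injective γ)
    (hemb : ∀ c : I, ∃ ψ, IsRelEmb (r c) (r (γ c)) ψ) :
    HomeoToClosedSubset (block p r I) (block p r J) := by
  choose ψ hψ using hemb
  obtain ⟨hI⟩ := nonempty_homeomorph_block (r := r) (I := I) hp
  obtain ⟨hJ⟩ := nonempty_homeomorph_block (r := r) (I := J) hp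
  have emb := hJ.isClosedEmbedding.comp
    ((Glued.isClosedEmbedding_mapIndex hp (.sigmaMap hγ hψ)).comp hI.symm.isClosedEmbedding)
  exact ⟨_, emb.isClosed_range, ⟨emb.isEmbedding.toHomeomorph⟩⟩

variable [Countable ι] [∀ c, Nonempty (D c)] {i₀ : ι}

lemma exists_isRelEmb_of_existsInjCont_block (hp : IsRigidBase p) (hr : ∀ c, r c i₀ = ⊤)
    (h : ExistsInjCont (block p r I) (block p r J)) {c : C} (hc : c ∈ I) :
    ∃ c' ∈ J, ∃ ψ, IsRelEmb (r c) (r c') ψ := by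
  obtain ⟨f, f_cont, f_inj⟩ := h
  obtain ⟨hI⟩ := nonempty_homeomorph_block (r := r) (I := I) hp.isOneSeparated
  obtain ⟨hJ⟩ := nonempty_homeomorph_block (r := r) (I := J) hp.isOneSeparated
  obtain ⟨φ, hφ, -⟩ := Glued.exists_isRelEmb_of_injective hp
    (hJ.symm.continuous.comp (f_cont.comp hI.continuous))
    (hJ.symm.injective.comp (f_inj.comp hI.injective))
  obtain ⟨c', ψ, hψ, -⟩ := hφ.exists_sigma (fun c : I => hr c) ⟨c, hc⟩
  exact ⟨c', c'.2, ψ, hψ⟩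

lemma exists_isRelEmb_of_homeomorph_block (hp : IsRigidBase p) (hr : ∀ c, r c i₀ = ⊤)
    (h : block p r I ≃ₜ block p r J) {c : C} (hc : c ∈ I) :
    ∃ c' ∈ J, (∃ ψ, IsRelEmb (r c) (r c') ψ) ∧ ∃ ψ, IsRelEmb (r c') (r c) ψ := by
  obtain ⟨hI⟩ := nonempty_homeomorph_block (r := r) (I := I) hp.isOneSeparated
  obtain ⟨hJ⟩ := nonempty_homeomorph_block (r := r) (I := J) hp.isOneSeparated
  obtain ⟨φ, hφ⟩ := Glued.exists_isRelEmb_of_homeomorph hp ((hI.trans h).trans hJ.symm)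
  obtain ⟨c', hc'⟩ := hφ.exists_sigma_of_equiv (fun c : I => hr c) (fun c : J => hr c) ⟨c, hc⟩
  exact ⟨c', c'.2, hc'⟩

end Blocks

section QuasiOrders

variable {Q κ : Type*} {le : Q → Q → Prop} {code : Q → κ}

/-- The indices of the summands of the space representing `q`: those `(code a, n)` with `a` below
`q`, except for `n = 0` unless `a = q`. The index `(code q, 0)` distinguishes `q` from the
elements equivalent to it. -/
def cellIndices (le : Q → Q → Prop) (code : Q → κ) (q : Q) : Set (κ × ℕ) :=
  {c | ∃ a, le a q ∧ code a = c.1 ∧ (c.2 = 0 → a = q)}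

lemma self_mem_cellIndices (hle : ∀ q, le q q) (q : Q) : (code q, 0) ∈ cellIndices le code q :=
  ⟨q, hle q, rfl, fun _ => rfl⟩

lemma le_of_mem_cellIndices (hcode : Injective code) {a q : Q} {n : ℕ}
    (h : (code a, n) ∈ cellIndices le code q) : le a q := by
  obtain ⟨b, hbq, hb, -⟩ := h
  exact hcode hb ▸ hbq

lemma eq_of_mem_cellIndices (hcode : Injective code) {a q : Q}
    (h : (code a, 0) ∈ cellIndices le code q) : a = q := by
  obtain ⟨b, -, hb, hbq⟩ := h
  exact hcode hb ▸ hbq rfl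

lemma succ_mem_cellIndices (htrans : ∀ a b c, le a b → le b c → le a c) {q q' : Q}
    (h : le q q') {c : κ × ℕ} (hc : c ∈ cellIndices le code q) :
    (c.1, c.2 + 1) ∈ cellIndices le code q' := by
  obtain ⟨a, haq, ha, -⟩ := hc
  exact ⟨a, htrans _ _ _ haq h, ha, fun h => (Nat.succ_ne_zero _ h).elim⟩

end QuasiOrders

theorem representsByClosedEmb_glued {ι B : Type} {κ : Type u} {D : κ × ℕ → Type u}
    [Countable ι] [MetricSpace B] {p : ι → B} (hp : IsRigidBase p) [∀ c, Nonempty (D c)]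
    {r : ∀ c, ι → Setoid (D c)} {i₀ : ι} (hr : ∀ c, r c i₀ = ⊤)
    (hemb : ∀ c c', (∃ ψ, IsRelEmb (r c) (r c') ψ) ↔ c.1 = c'.1 ∧ c.2 ≤ c'.2) :
    RepresentsByClosedEmb #κ (Glued p (sigmaRel r)) := by
  intro Q le hQ hrefl htrans
  have : Nonempty ι := ⟨i₀⟩
  obtain ⟨code⟩ := hQ
  have le_of_existsInjCont {q q' : Q}
      (h : ExistsInjCont (block p r (cellIndices le code q))
        (block p r (cellIndices le code q'))) : le q q' := by
    obtain ⟨⟨_, n⟩, hc, h⟩ :=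
      exists_isRelEmb_of_existsInjCont_block hp hr h (self_mem_cellIndices hrefl q)
    obtain ⟨rfl, -⟩ := (hemb _ _).1 h
    exact le_of_mem_cellIndices code.injective hc
  refine ⟨fun q => block p r (cellIndices le code q), fun _ => isClopen_block hp.isOneSeparated,
    fun q q' hne => ⟨fun h => hne ?_⟩, fun q q' => ⟨fun h => ?_, ?_⟩,
    fun _ _ h => mt le_of_existsInjCont h⟩
  · obtain ⟨⟨_, n⟩, hc, h, h'⟩ :=
      exists_isRelEmb_of_homeomorph_block hp hr h (self_mem_cellIndices hrefl q)
    obtain ⟨rfl, -⟩ := (hemb _ _).1 h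
    obtain rfl : n = 0 := Nat.le_zero.1 ((hemb _ _).1 h').2
    exact eq_of_mem_cellIndices code.injective hc
  · refine homeoToClosedSubset_block hp.isOneSeparated
      (γ := fun c => ⟨_, succ_mem_cellIndices htrans h c.2⟩) (fun c c' h => ?_)
      fun c => (hemb _ _).2 ⟨rfl, Nat.le_succ _⟩
    simpa [Prod.ext_iff, Subtype.ext_iff] using h
  · rintro ⟨t, -, ⟨g⟩⟩
    exact le_of_existsInjCont
      ⟨_, continuous_subtype_val.comp g.continuous, Subtype.val_injective.comp g.injective⟩

lemma mk_sigma_cell {κ : Type u} (hκ : ℵ₀ ≤ #κ) :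
    #(Σ c : κ × ℕ, (WithTop κ × WithTop κ) ⊕ Fin c.2) = #κ := by
  have mk_withTop : #(WithTop κ) = #κ := (mk_option (α := κ)).trans (add_one_eq hκ)
  have mk_cell_le (n : ℕ) : #((WithTop κ × WithTop κ) ⊕ Fin n) ≤ #κ := by
    rw [mk_sum, mk_prod, mk_withTop, lift_id, mul_eq_self hκ, lift_uzero, mk_fin, lift_natCast]
    exact add_le_of_le hκ le_rfl (natCast_lt_aleph0.le.trans hκ)
  apply le_antisymm
  · calc #(Σ c : κ × ℕ, (WithTop κ × WithTop κ) ⊕ Fin c.2)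
        ≤ sum fun _ : κ × ℕ => #κ := (mk_sigma _).trans_le (sum_le_sum _ _ fun c => mk_cell_le c.2)
      _ = #κ * ℵ₀ * #κ := by simp
      _ ≤ #κ := mul_le_of_le hκ (mul_le_of_le hκ le_rfl hκ) le_rfl
  · exact mk_le_of_injective (f := fun i => ⟨(i, 0), .inl (⊤, ⊤)⟩)
      fun i j h => (Prod.ext_iff.1 (congrArg Sigma.fst h)).1

end ClopenRepresentation

open ClopenRepresentation

theorem statement4 (α : Cardinal.{u}) (hα : Cardinal.continuum ≤ α) :
    ∃ (X : Type u) (tX : TopologicalSpace X),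
      @TopologicalSpace.MetrizableSpace X tX ∧ #X = α ∧
      @RepresentsByClosedEmb α X tX := by
  obtain ⟨l, hl⟩ := exists_isLadderSystem (WithTop α.ord.ToType)
  obtain ⟨A, p, hp⟩ := exists_isRigidBase CellRel
  have mk_eq : #α.ord.ToType = α := mk_ord_toType α
  have aleph0_le : ℵ₀ ≤ #α.ord.ToType := (aleph0_le_continuum.trans hα).trans_eq mk_eq.symm
  have : Infinite α.ord.ToType := infinite_iff.2 aleph0_le
  let r (c : α.ord.ToType × ℕ) := cellRel l c.1 c.2
  have mk_cells := mk_sigma_cell aleph0_le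
  have emb_iff (c c' : α.ord.ToType × ℕ) :
      (∃ ψ, IsRelEmb (r c) (r c') ψ) ↔ c.1 = c'.1 ∧ c.2 ≤ c'.2 := by
    rw [exists_isRelEmb_cellRel_iff hl WithTop.coe_ne_top, WithTop.coe_inj]
  have mk_base_le : Cardinal.lift.{u} #A ≤ α :=
    ((Cardinal.lift_le.2 (mk_set_le A)).trans (by simp [mk_real])).trans hα
  refine ⟨Glued p (sigmaRel r), inferInstance, inferInstance, ?_, ?_⟩
  · rw [Glued.cardinal_mk_eq hp (mk_cells ▸ aleph0_le) (by rwa [mk_cells, mk_eq]), mk_cells, mk_eq]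
  · have := representsByClosedEmb_glued hp (i₀ := .whole) (fun _ => rfl) emb_iff
    rwa [mk_eq] at this
end
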